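/- arXiv:1610.00394 — 2 statements merged into one kernel-verified Lean document; each statement's English description precedes it below -/
import Mathlib

section
/- If problem (Q) is feasible, then its infimum q* is finite and is attained: there exists a feasible pair (η*, η_T*) with ⟨η*,h⟩ + ⟨η_T*,H⟩ = q*. -/
open MeasureTheory Set ProbabilityTheory

noncomputable section

/-- The input constraint set `U = [-1,1]^m`. -/
def Ubox (m : ℕ) : Set (Fin m → ℝ) := Set.Icc (fun _ => (-1 : ℝ)) (fun _ => (1 : ℝ))

/-- The controlled vector field `F(t,x,u) = f(t,x) + g(t,x) u`. -/
def Fvec {n m : ℕ} (f : ℝ × (Fin n → ℝ) → Fin n → ℝ)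
    (g : ℝ × (Fin n → ℝ) → Fin n → Fin m → ℝ)
    (z : ℝ × (Fin n → ℝ) × (Fin m → ℝ)) : Fin n → ℝ :=
  fun k => f (z.1, z.2.1) k + ∑ j, g (z.1, z.2.1) k j * z.2.2 j

/-- `(L_F v)(t,x,u) = ∂v/∂t + Σ_k (∂v/∂x_k)·[F(t,x,u)]_k`. -/
def LFop {n m : ℕ} (f : ℝ × (Fin n → ℝ) → Fin n → ℝ)
    (g : ℝ × (Fin n → ℝ) → Fin n → Fin m → ℝ)
    (v : ℝ × (Fin n → ℝ) → ℝ) (z : ℝ × (Fin n → ℝ) × (Fin m → ℝ)) : ℝ :=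
  fderiv ℝ v (z.1, z.2.1) ((1 : ℝ), (0 : Fin n → ℝ)) +
    ∑ k, fderiv ℝ v (z.1, z.2.1) ((0 : ℝ), Pi.single k (1 : ℝ)) * Fvec f g z k

/-- Liouville's equation for a pair of measures `(η, ηT)` with initial point `x₀`. -/
def SatisfiesLiouville {n m : ℕ} (T : ℝ) (x₀ : Fin n → ℝ)
    (f : ℝ × (Fin n → ℝ) → Fin n → ℝ) (g : ℝ × (Fin n → ℝ) → Fin n → Fin m → ℝ)
    (η : Measure (ℝ × (Fin n → ℝ) × (Fin m → ℝ))) (ηT : Measure (Fin n → ℝ)) : Prop :=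
  ∀ v : ℝ × (Fin n → ℝ) → ℝ, ContDiff ℝ 1 v →
    v (0, x₀) + ∫ z, LFop f g v z ∂η = ∫ y, v (T, y) ∂ηT

/-- An admissible pair: a Borel measurable control `u` with values in `U` and an
absolutely continuous trajectory `x` with `x(0) = x₀`, `x(T) ∈ X_T`, `x(t) ∈ X` on `[0,T]`
and `ẋ = F(t,x,u)` a.e. (encoded in integral form). -/
def IsAdmissiblePair {n m : ℕ} (T : ℝ) (X XT : Set (Fin n → ℝ)) (x₀ : Fin n → ℝ)
    (f : ℝ × (Fin n → ℝ) → Fin n → ℝ) (g : ℝ × (Fin n → ℝ) → Fin n → Fin m → ℝ)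
    (x : ℝ → Fin n → ℝ) (u : ℝ → Fin m → ℝ) : Prop :=
  Measurable u ∧ (∀ t ∈ Set.Icc (0 : ℝ) T, u t ∈ Ubox m) ∧
  x 0 = x₀ ∧ x T ∈ XT ∧ (∀ t ∈ Set.Icc (0 : ℝ) T, x t ∈ X) ∧
  IntegrableOn (fun s => Fvec f g (s, x s, u s)) (Set.Icc (0 : ℝ) T) volume ∧
  ∀ t ∈ Set.Icc (0 : ℝ) T, x t = x₀ + ∫ s in Set.Icc (0 : ℝ) t, Fvec f g (s, x s, u s)

/-- The cost `J(x,u) = ∫₀^T h(t,x(t),u(t)) dt + H(x(T))` of an admissible pair. -/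
def Jcost {n m : ℕ} (T : ℝ) (h : ℝ × (Fin n → ℝ) × (Fin m → ℝ) → ℝ)
    (H : (Fin n → ℝ) → ℝ) (x : ℝ → Fin n → ℝ) (u : ℝ → Fin m → ℝ) : ℝ :=
  (∫ t in Set.Icc (0 : ℝ) T, h (t, x t, u t)) + H (x T)

/-- The set of costs of admissible pairs; its infimum is `J*`. -/
def JVals {n m : ℕ} (T : ℝ) (X XT : Set (Fin n → ℝ)) (x₀ : Fin n → ℝ)
    (f : ℝ × (Fin n → ℝ) → Fin n → ℝ) (g : ℝ × (Fin n → ℝ) → Fin n → Fin m → ℝ)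
    (h : ℝ × (Fin n → ℝ) × (Fin m → ℝ) → ℝ) (H : (Fin n → ℝ) → ℝ) : Set ℝ :=
  {c | ∃ (x : ℝ → Fin n → ℝ) (u : ℝ → Fin m → ℝ),
    IsAdmissiblePair T X XT x₀ f g x u ∧ c = Jcost T h H x u}

/-- Feasibility for problem `(Q)`. -/
def QFeasible {n m : ℕ} (T : ℝ) (X XT : Set (Fin n → ℝ)) (x₀ : Fin n → ℝ)
    (f : ℝ × (Fin n → ℝ) → Fin n → ℝ) (g : ℝ × (Fin n → ℝ) → Fin n → Fin m → ℝ)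
    (η : Measure (ℝ × (Fin n → ℝ) × (Fin m → ℝ))) (ηT : Measure (Fin n → ℝ)) : Prop :=
  IsFiniteMeasure η ∧ IsFiniteMeasure ηT ∧
  η ((Set.Icc (0 : ℝ) T ×ˢ X ×ˢ Ubox m)ᶜ) = 0 ∧ ηT (XTᶜ) = 0 ∧
  SatisfiesLiouville T x₀ f g η ηT

/-- The cost `⟨η,h⟩ + ⟨η_T,H⟩` of a pair of measures. -/
def Qcost {n m : ℕ} (h : ℝ × (Fin n → ℝ) × (Fin m → ℝ) → ℝ) (H : (Fin n → ℝ) → ℝ)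
    (η : Measure (ℝ × (Fin n → ℝ) × (Fin m → ℝ))) (ηT : Measure (Fin n → ℝ)) : ℝ :=
  ∫ z, h z ∂η + ∫ y, H y ∂ηT

/-- The set of costs of feasible points of `(Q)`; its infimum is `q*`. -/
def QVals {n m : ℕ} (T : ℝ) (X XT : Set (Fin n → ℝ)) (x₀ : Fin n → ℝ)
    (f : ℝ × (Fin n → ℝ) → Fin n → ℝ) (g : ℝ × (Fin n → ℝ) → Fin n → Fin m → ℝ)
    (h : ℝ × (Fin n → ℝ) × (Fin m → ℝ) → ℝ) (H : (Fin n → ℝ) → ℝ) : Set ℝ :=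
  {c | ∃ (η : Measure (ℝ × (Fin n → ℝ) × (Fin m → ℝ))) (ηT : Measure (Fin n → ℝ)),
    QFeasible T X XT x₀ f g η ηT ∧ c = Qcost h H η ηT}

/-- A function continuous on a compact set `K` has the same integrals as a bounded continuous
function, for all measures that do not charge the complement of `K`. -/
lemma exists_bcf_integral_eq {E : Type*} [TopologicalSpace E] [T2Space E] [NormalSpace E]
    [MeasurableSpace E] {K : Set E} (hK : IsCompact K) {φ : E → ℝ} (hφ : ContinuousOn φ K) :
    ∃ ψ : BoundedContinuousFunction E ℝ,
      ∀ μ : Measure E, μ Kᶜ = 0 → ∫ z, φ z ∂μ = ∫ z, ψ z ∂μ := by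
  have : CompactSpace K := isCompact_iff_compactSpace.mp hK
  obtain ⟨ψ, -, hψ⟩ := BoundedContinuousFunction.exists_norm_eq_domRestrict_eq_of_closed
    (BoundedContinuousFunction.mkOfCompact ⟨K.domRestrict φ, hφ.domRestrict⟩) hK.isClosed
  refine ⟨ψ, fun μ hμ => integral_congr_ae ?_⟩
  have h1 : ∀ᵐ z ∂μ, z ∈ K := hμ
  filter_upwards [h1] with z hz
  have := DFunLike.congr_fun hψ ⟨z, hz⟩
  exact this.symm

lemma continuousOn_LFop {n m : ℕ} {T : ℝ} {X : Set (Fin n → ℝ)}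
    {f : ℝ × (Fin n → ℝ) → Fin n → ℝ} {g : ℝ × (Fin n → ℝ) → Fin n → Fin m → ℝ}
    (hf : ContinuousOn f (Set.Icc (0 : ℝ) T ×ˢ Set.univ))
    (hg : ContinuousOn g (Set.Icc (0 : ℝ) T ×ˢ Set.univ))
    {v : ℝ × (Fin n → ℝ) → ℝ} (hv : ContDiff ℝ 1 v) :
    ContinuousOn (LFop f g v) (Set.Icc (0 : ℝ) T ×ˢ X ×ˢ Ubox m) := by
  have hp : ContinuousOn (fun z : ℝ × (Fin n → ℝ) × (Fin m → ℝ) => (z.1, z.2.1))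
      (Set.Icc (0 : ℝ) T ×ˢ X ×ˢ Ubox m) := by fun_prop
  have hmap : MapsTo (fun z : ℝ × (Fin n → ℝ) × (Fin m → ℝ) => (z.1, z.2.1))
      (Set.Icc (0 : ℝ) T ×ˢ X ×ˢ Ubox m) (Set.Icc (0 : ℝ) T ×ˢ Set.univ) :=
    fun z hz => ⟨hz.1, mem_univ _⟩
  have hf' := hf.comp hp hmap
  have hg' := hg.comp hp hmap
  have hd : Continuous (fderiv ℝ v) := hv.continuous_fderiv (by norm_num)
  have hd' : ∀ w, ContinuousOn
      (fun z : ℝ × (Fin n → ℝ) × (Fin m → ℝ) => fderiv ℝ v (z.1, z.2.1) w)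
      (Set.Icc (0 : ℝ) T ×ˢ X ×ˢ Ubox m) := fun w =>
    (hd.comp_continuousOn hp).clm_apply continuousOn_const
  unfold LFop Fvec
  refine (hd' _).add (continuousOn_finsetSum _ fun k _ => (hd' _).mul ?_)
  refine (continuousOn_pi.1 hf' k).add (continuousOn_finsetSum _ fun j _ => ?_)
  refine (continuousOn_pi.1 (continuousOn_pi.1 hg' k) j).mul ?_
  fun_prop

lemma liouville_mass {n m : ℕ} {T : ℝ} {x₀ : Fin n → ℝ}
    {f : ℝ × (Fin n → ℝ) → Fin n → ℝ} {g : ℝ × (Fin n → ℝ) → Fin n → Fin m → ℝ}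
    {η : Measure (ℝ × (Fin n → ℝ) × (Fin m → ℝ))} {ηT : Measure (Fin n → ℝ)}
    (hL : SatisfiesLiouville T x₀ f g η ηT) : η.real univ = T ∧ ηT.real univ = 1 := by
  have h1 := hL (fun _ => 1) contDiff_const
  have h2 := hL (fun z => z.1) contDiff_fst
  have e2 : LFop f g (fun z : ℝ × (Fin n → ℝ) => z.1) = fun _ => (1 : ℝ) := by
    funext z
    simp [LFop, fderiv_fst]
  simp [LFop] at h1
  rw [e2] at h2
  simp [← h1] at h2
  exact ⟨h2, h1.symm⟩

/-- if problem (Q) is feasible, then its infimum q* is finite and attained: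
there is a feasible pair (η*, η_T*) whose cost is a least element of the set of feasible
costs of (Q). -/
theorem Q_minimum_attained
    {n m : ℕ} (hn : 0 < n) (hm : 0 < m) (T : ℝ) (hT : 0 < T)
    (X XT : Set (Fin n → ℝ)) (hX : IsCompact X) (hXT : IsCompact XT) (hXTsub : XT ⊆ X)
    (x₀ : Fin n → ℝ) (hx₀ : x₀ ∈ X)
    (f : ℝ × (Fin n → ℝ) → Fin n → ℝ) (g : ℝ × (Fin n → ℝ) → Fin n → Fin m → ℝ)
    (hf : ContinuousOn f (Set.Icc (0 : ℝ) T ×ˢ Set.univ))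
    (hg : ContinuousOn g (Set.Icc (0 : ℝ) T ×ˢ Set.univ))
    (h : ℝ × (Fin n → ℝ) × (Fin m → ℝ) → ℝ) (H : (Fin n → ℝ) → ℝ)
    (hh : Continuous h) (hH : Continuous H)
    (hQfeas : ∃ (η : Measure (ℝ × (Fin n → ℝ) × (Fin m → ℝ))) (ηT : Measure (Fin n → ℝ)),
      QFeasible T X XT x₀ f g η ηT) :
    ∃ (η : Measure (ℝ × (Fin n → ℝ) × (Fin m → ℝ))) (ηT : Measure (Fin n → ℝ)),
      QFeasible T X XT x₀ f g η ηT ∧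
      IsLeast (QVals T X XT x₀ f g h H) (Qcost h H η ηT) := by
  obtain ⟨η₀, ηT₀, hfeas₀⟩ := hQfeas
  set K : Set (ℝ × (Fin n → ℝ) × (Fin m → ℝ)) := Set.Icc (0 : ℝ) T ×ˢ X ×ˢ Ubox m with hKdef
  have hK : IsCompact K := isCompact_Icc.prod (hX.prod isCompact_Icc)
  have hA := isCompact_setOfPred_finiteMeasure_le_of_isCompact (Real.toNNReal T) hK
  have hB := isCompact_setOfPred_finiteMeasure_le_of_isCompact 1 hXT
  set A := {μ : FiniteMeasure (ℝ × (Fin n → ℝ) × (Fin m → ℝ)) |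
    μ.mass ≤ Real.toNNReal T ∧ μ Kᶜ = 0}
  set B := {μ : FiniteMeasure (Fin n → ℝ) | μ.mass ≤ 1 ∧ μ XTᶜ = 0}
  have key : ∀ (φ : ℝ × (Fin n → ℝ) × (Fin m → ℝ) → ℝ) (ψ : (Fin n → ℝ) → ℝ),
      ContinuousOn φ K → Continuous ψ →
      ∃ c₁ c₂ : FiniteMeasure (ℝ × (Fin n → ℝ) × (Fin m → ℝ)) × FiniteMeasure (Fin n → ℝ) → ℝ,
        Continuous c₁ ∧ Continuous c₂ ∧ ∀ p ∈ A ×ˢ B,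
          ∫ z, φ z ∂(p.1 : Measure _) = c₁ p ∧ ∫ z, ψ z ∂(p.2 : Measure _) = c₂ p := by
    intro φ ψ hφ hψ
    obtain ⟨φ', hφ'⟩ := exists_bcf_integral_eq hK hφ
    obtain ⟨ψ', hψ'⟩ := exists_bcf_integral_eq hXT hψ.continuousOn
    refine ⟨fun p => ∫ z, φ' z ∂(p.1 : Measure _), fun p => ∫ z, ψ' z ∂(p.2 : Measure _),
      (FiniteMeasure.continuous_integral_boundedContinuousFunction φ').comp continuous_fst,
      (FiniteMeasure.continuous_integral_boundedContinuousFunction ψ').comp continuous_snd, ?_⟩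
    intro p hp
    exact ⟨hφ' _ ((FiniteMeasure.null_iff_toMeasure_null _ _).1 hp.1.2),
      hψ' _ ((FiniteMeasure.null_iff_toMeasure_null _ _).1 hp.2.2)⟩
  set S := {p : FiniteMeasure (ℝ × (Fin n → ℝ) × (Fin m → ℝ)) × FiniteMeasure (Fin n → ℝ) |
    p ∈ A ×ˢ B ∧ SatisfiesLiouville T x₀ f g (p.1 : Measure _) (p.2 : Measure _)} with hS
  have hSc : IsCompact S := by
    have hL : ∀ v : {v : ℝ × (Fin n → ℝ) → ℝ // ContDiff ℝ 1 v}, _ := fun v =>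
      key (LFop f g v.1) (fun y => v.1 (T, y)) (continuousOn_LFop hf hg v.2)
        (v.2.continuous.comp (by fun_prop))
    choose c₁ c₂ hc₁ hc₂ hc using hL
    have hEq : S = (A ×ˢ B) ∩ ⋂ v : {v : ℝ × (Fin n → ℝ) → ℝ // ContDiff ℝ 1 v},
        {p | v.1 (0, x₀) + c₁ v p = c₂ v p} := by
      ext p
      simp only [hS, mem_ofPred_eq, mem_inter_iff, mem_iInter]
      refine and_congr_right fun hp => ?_
      constructor
      · intro hL v
        rw [← (hc v p hp).1, ← (hc v p hp).2]
        exact hL v.1 v.2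
      · intro hL v hv
        have := hL ⟨v, hv⟩
        rw [← (hc _ p hp).1, ← (hc _ p hp).2] at this
        exact this
    rw [hEq]
    exact (hA.prod hB).inter_right (isClosed_iInter fun v =>
      isClosed_eq (continuous_const.add (hc₁ v)) (hc₂ v))
  have hmem : ∀ (η : Measure (ℝ × (Fin n → ℝ) × (Fin m → ℝ))) (ηT : Measure (Fin n → ℝ)),
      QFeasible T X XT x₀ f g η ηT → ∃ p ∈ S, (p.1 : Measure _) = η ∧ (p.2 : Measure _) = ηT := by
    rintro η ηT ⟨h1, h2, h3, h4, h5⟩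
    obtain ⟨m1, m2⟩ := liouville_mass h5
    refine ⟨(⟨η, h1⟩, ⟨ηT, h2⟩), ⟨⟨⟨?_, ?_⟩, ?_, ?_⟩, h5⟩, rfl, rfl⟩
    · rw [← NNReal.coe_le_coe, Real.coe_toNNReal _ hT.le]
      exact m1.le
    · exact (FiniteMeasure.null_iff_toMeasure_null _ _).2 h3
    · rw [← NNReal.coe_le_coe]
      exact m2.le
    · exact (FiniteMeasure.null_iff_toMeasure_null _ _).2 h4
  obtain ⟨c₁, c₂, hc₁, hc₂, hc⟩ := key h H hh.continuousOn hH
  obtain ⟨p₀, hp₀, -⟩ := hmem _ _ hfeas₀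
  obtain ⟨p, hp, hmin⟩ := hSc.exists_isMinOn ⟨p₀, hp₀⟩ (hc₁.add hc₂).continuousOn
  have hpf : QFeasible T X XT x₀ f g (p.1 : Measure _) (p.2 : Measure _) :=
    ⟨inferInstance, inferInstance, (FiniteMeasure.null_iff_toMeasure_null _ _).1 hp.1.1.2,
      (FiniteMeasure.null_iff_toMeasure_null _ _).1 hp.1.2.2, hp.2⟩
  refine ⟨p.1, p.2, hpf, ⟨_, _, hpf, rfl⟩, ?_⟩
  rintro c ⟨η, ηT, hfe, rfl⟩
  obtain ⟨q, hq, rfl, rfl⟩ := hmem _ _ hfe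
  have := hmin hq
  unfold Qcost
  rw [(hc p hp.1).1, (hc p hp.1).2, (hc q hq.1).1, (hc q hq.1).2]
  exact this

end
end

section
/- Assume h(t,x,·) is convex on ℝ^m for every (t,x), and that the optimal control problem admits an optimal admissible pair (x*,u*), unique up to equality for Lebesgue-a.e. t. If problem (Q) is feasible, then its minimum q* equals the optimal value of the optimal control problem: q* = J* = J(x*,u*). -/
open MeasureTheory Set ProbabilityTheory

noncomputable section

section Aux
open Filter Topology

/-- Nested closed convex bounded sets in a Hilbert space intersect. -/
lemma hilbert_inter {E : Type*} [NormedAddCommGroup E] [InnerProductSpace ℝ E] [CompleteSpace E]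
    (S : ℕ → Set E) (hanti : Antitone S) (hne : ∀ k, (S k).Nonempty)
    (hcl : ∀ k, IsClosed (S k)) (hcv : ∀ k, Convex ℝ (S k)) (R : ℝ)
    (hR : ∀ k, ∀ w ∈ S k, ‖w‖ ≤ R) : ∃ w, ∀ k, w ∈ S k := by
  have h1 : ∀ k, ∃ v ∈ S k, ∀ w ∈ S k, ‖v‖ ≤ ‖w‖ := by
    intro k
    obtain ⟨v, hv, he⟩ := exists_norm_eq_iInf_of_complete_convex (hne k) (hcl k).isComplete
      (hcv k) 0
    refine ⟨v, hv, fun w hw => ?_⟩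
    simp only [zero_sub, norm_neg] at he
    rw [he]
    exact ciInf_le (f := fun w : S k => ‖(w : E)‖)
      ⟨0, by rintro _ ⟨w, rfl⟩; exact norm_nonneg _⟩ ⟨w, hw⟩
  choose v hv hmin using h1
  have hmono : Monotone (fun k => ‖v k‖ ^ 2) := by
    intro k l hkl
    have := hmin k (v l) (hanti hkl (hv l))
    dsimp only
    gcongr
  have hbdd : BddAbove (range (fun k => ‖v k‖ ^ 2)) := by
    refine ⟨R ^ 2, ?_⟩
    rintro _ ⟨k, rfl⟩
    have := hR k _ (hv k)
    dsimp only
    gcongr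
  have hlim := tendsto_atTop_ciSup hmono hbdd
  have hcs := hlim.cauchySeq
  have hpar : ∀ k l, k ≤ l → ‖v k - v l‖ ^ 2 ≤ 2 * (‖v l‖ ^ 2 - ‖v k‖ ^ 2) := by
    intro k l hkl
    have hmid : (1/2 : ℝ) • v k + (1/2 : ℝ) • v l ∈ S k :=
      hcv k (hv k) (hanti hkl (hv l)) (by norm_num) (by norm_num) (by norm_num)
    have h2 := hmin k _ hmid
    rw [← smul_add, norm_smul] at h2
    norm_num at h2
    have h3 := parallelogram_law_with_norm ℝ (v k) (v l)
    nlinarith [norm_nonneg (v k), norm_nonneg (v k + v l)]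
  have hc : CauchySeq v := by
    rw [Metric.cauchySeq_iff'] at hcs ⊢
    intro ε hε
    obtain ⟨N, hN⟩ := hcs (ε ^ 2 / 2) (by positivity)
    refine ⟨N, fun l hl => ?_⟩
    have h4 := hN l hl
    rw [Real.dist_eq] at h4
    have h5 := hpar N l hl
    rw [dist_comm, dist_eq_norm]
    have h6 := le_abs_self (‖v l‖ ^ 2 - ‖v N‖ ^ 2)
    have : ‖v N - v l‖ ^ 2 < ε ^ 2 := by linarith
    exact lt_of_pow_lt_pow_left₀ 2 hε.le this
  obtain ⟨w, hw⟩ := cauchySeq_tendsto_of_complete hc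
  refine ⟨w, fun k => (hcl k).mem_of_tendsto hw ?_⟩
  filter_upwards [eventually_ge_atTop k] with l hl using hanti hl (hv l)

/-- Mollification with order properties. -/
lemma mollify {G : Type*} [NormedAddCommGroup G] [NormedSpace ℝ G] [FiniteDimensional ℝ G]
    (W : G → ℝ) (hW : Continuous W) (r : ℝ) (hr : 0 < r) :
    ∃ v : G → ℝ, ContDiff ℝ 1 v ∧
      (∀ z w : G, ∀ D : ℝ, (∀ y, ‖y‖ < r → W (z + y) ≤ W (w + y) + D) → v z ≤ v w + D) ∧
      (∀ z : G, ∀ D : ℝ, (∀ y, ‖y‖ < r → W (z + y) ≤ D) → v z ≤ D) ∧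
      (∀ z : G, ∀ D : ℝ, (∀ y, ‖y‖ < r → D ≤ W (z + y)) → D ≤ v z) := by
  borelize G
  let μ : Measure G := Measure.addHaar
  let φ : ContDiffBump (0 : G) := ⟨r / 2, r, half_pos hr, half_lt_self hr⟩
  let ρ : G → ℝ := φ.normed μ
  let v : G → ℝ := fun z => ∫ y, ρ y * W (z - y) ∂μ
  have hint : ∀ z, Integrable (fun y => ρ y * W (z - y)) μ := by
    intro z
    refine Continuous.integrable_of_hasCompactSupport ?_ ?_
    · exact (φ.contDiff_normed (n := 0)).continuous.mul (by fun_prop)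
    · exact φ.hasCompactSupport_normed.mul_right
  have hρ1 : ∫ y, ρ y ∂μ = 1 := φ.integral_normed
  have hρi : Integrable ρ μ := φ.integrable_normed
  have hρ0 : ∀ y, 0 ≤ ρ y := fun y => φ.nonneg_normed y
  have hsupp : ∀ y, ρ y ≠ 0 → ‖-y‖ < r := by
    intro y hy
    have : y ∈ Function.support (φ.normed μ) := hy
    rw [φ.support_normed_eq] at this
    simpa using this
  have hA : ∀ z w : G, ∀ D : ℝ, (∀ y, ‖y‖ < r → W (z + y) ≤ W (w + y) + D) → v z ≤ v w + D := by
    intro z w D hD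
    have : v w + D = ∫ y, ρ y * W (w - y) + ρ y * D ∂μ := by
      rw [integral_add (hint w) (hρi.mul_const D), integral_mul_const, hρ1, one_mul]
    rw [this]
    refine integral_mono (hint z) ((hint w).add (hρi.mul_const D)) fun y => ?_
    dsimp only
    by_cases hy : ρ y = 0
    · simp [hy]
    · have := hD (-y) (hsupp y hy)
      rw [← sub_eq_add_neg, ← sub_eq_add_neg] at this
      rw [← mul_add]
      exact mul_le_mul_of_nonneg_left this (hρ0 y)
  refine ⟨v, ?_, hA, ?_, ?_⟩
  · have := (φ.hasCompactSupport_normed (μ := μ)).contDiff_convolution_left (ContinuousLinearMap.lsmul ℝ ℝ)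
      (n := 1) (μ := μ) φ.contDiff_normed (hW.locallyIntegrable (μ := μ))
    exact this
  · intro z D hD
    have : D = ∫ y, ρ y * D ∂μ := by rw [integral_mul_const, hρ1, one_mul]
    rw [this]
    refine integral_mono (hint z) (hρi.mul_const D) fun y => ?_
    dsimp only
    by_cases hy : ρ y = 0
    · simp [hy]
    · have := hD (-y) (hsupp y hy)
      rw [← sub_eq_add_neg] at this
      exact mul_le_mul_of_nonneg_left this (hρ0 y)
  · intro z D hD
    have : D = ∫ y, ρ y * D ∂μ := by rw [integral_mul_const, hρ1, one_mul]
    rw [this]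
    refine integral_mono (hρi.mul_const D) (hint z) fun y => ?_
    dsimp only
    by_cases hy : ρ y = 0
    · simp [hy]
    · have := hD (-y) (hsupp y hy)
      rw [← sub_eq_add_neg] at this
      exact mul_le_mul_of_nonneg_left this (hρ0 y)

/-- Abstract data for the penalized control problem. -/
structure Dat (n : ℕ) (K Y : Type) [MeasurableSpace K] where
  φ : K → (Fin n → ℝ)
  ab : K → ℝ × (Fin n → ℝ)
  c : K → ℝ
  e : Y → (Fin n → ℝ)
  d : Y → ℝ
  M : ℝ
  T : ℝ
  hM : 0 ≤ M
  hT : 0 < T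
  mφ : Measurable φ
  mab : Measurable ab
  mc : Measurable c
  bφ : ∀ q, ‖φ q‖ ≤ M
  bab : ∀ q, ‖ab q‖ ≤ M
  bc : ∀ q, |c q| ≤ M
  be : ∀ y, ‖e y‖ ≤ M
  bd : ∀ y, |d y| ≤ M

namespace Dat
variable {n : ℕ} {K Y : Type} [MeasurableSpace K] (A : Dat n K Y)

/-- Trajectory. -/
def traj (p : ℝ → K) (t : ℝ) (x : Fin n → ℝ) (s : ℝ) : Fin n → ℝ :=
  x + ∫ σ in t..s, A.φ (p σ)

/-- Running cost. -/
def rcost (k : ℝ) (p : ℝ → K) (t : ℝ) (x : Fin n → ℝ) (s : ℝ) : ℝ :=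
  A.c (p s) + k * ‖(s, A.traj p t x s) - A.ab (p s)‖

/-- Total cost. -/
def cost (k t : ℝ) (x : Fin n → ℝ) (p : ℝ → K) (y : Y) : ℝ :=
  (∫ s in t..A.T, A.rcost k p t x s) + (A.d y + k * ‖A.traj p t x A.T - A.e y‖)

/-- Value function. -/
def V (k t : ℝ) (x : Fin n → ℝ) : ℝ :=
  ⨅ θ : {p : ℝ → K // Measurable p} × Y, A.cost k t x θ.1 θ.2

lemma ii_bdd {F : Type*} [NormedAddCommGroup F] [MeasurableSpace F] [BorelSpace F]
    [SecondCountableTopology F] (g : ℝ → F) (hg : Measurable g) (C : ℝ) (hC : ∀ s, ‖g s‖ ≤ C)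
    (a b : ℝ) : IntervalIntegrable g volume a b := by
  rw [intervalIntegrable_iff]
  exact Measure.integrableOn_of_bounded (M := C) (by simp) hg.aestronglyMeasurable
    (Eventually.of_forall hC)


lemma iiφ {p : ℝ → K} (hp : Measurable p) (a b : ℝ) : IntervalIntegrable (fun s => A.φ (p s)) volume a b :=
  ii_bdd _ (A.mφ.comp hp) A.M (fun s => A.bφ _) a b

lemma traj_cont {p : ℝ → K} (hp : Measurable p) (t : ℝ) (x : Fin n → ℝ) : Continuous (A.traj p t x) :=
  continuous_const.add (intervalIntegral.continuous_primitive (A.iiφ hp) t)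

lemma traj_split {p : ℝ → K} (hp : Measurable p) (t t' s : ℝ) (x : Fin n → ℝ) :
    A.traj p t' (A.traj p t x t') s = A.traj p t x s := by
  unfold traj
  rw [add_assoc, intervalIntegral.integral_add_adjacent_intervals (A.iiφ hp _ _) (A.iiφ hp _ _)]

lemma traj_dist {p : ℝ → K} (hp : Measurable p) (t s s' : ℝ) (x : Fin n → ℝ) :
    ‖A.traj p t x s' - A.traj p t x s‖ ≤ A.M * |s' - s| := by
  unfold traj
  rw [add_sub_add_left_eq_sub,
    intervalIntegral.integral_interval_sub_left (A.iiφ hp _ _) (A.iiφ hp _ _)]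
  exact intervalIntegral.norm_integral_le_of_norm_le_const (fun s _ => A.bφ _)

lemma ii_rcost {p : ℝ → K} (hp : Measurable p) (k t : ℝ) (x : Fin n → ℝ) (a b : ℝ) :
    IntervalIntegrable (A.rcost k p t x) volume a b := by
  unfold rcost
  refine (ii_bdd _ (A.mc.comp hp) A.M (fun s => A.bc _) a b).add (IntervalIntegrable.const_mul ?_ k)
  refine IntervalIntegrable.norm (IntervalIntegrable.sub ?_ ?_)
  · exact (continuous_id.prodMk (A.traj_cont hp t x)).intervalIntegrable a b
  · exact ii_bdd _ (A.mab.comp hp) A.M (fun s => A.bab _) a b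

lemma cost_split {p : ℝ → K} (hp : Measurable p) (k t t' : ℝ) (x : Fin n → ℝ) (y : Y) :
    A.cost k t x p y = (∫ s in t..t', A.rcost k p t x s) + A.cost k t' (A.traj p t x t') p y := by
  unfold cost
  rw [A.traj_split hp, ← intervalIntegral.integral_add_adjacent_intervals
    (A.ii_rcost hp k t x t t') (A.ii_rcost hp k t x t' A.T)]
  have : A.rcost k p t' (A.traj p t x t') = A.rcost k p t x := by
    funext s
    unfold rcost
    rw [A.traj_split hp]
  rw [this]; ring

lemma cost_lip {p : ℝ → K} (hp : Measurable p) {k : ℝ} (hk : 0 ≤ k) {t : ℝ} (ht : t ≤ A.T) (x x' : Fin n → ℝ) (y : Y) :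
    A.cost k t x p y ≤ A.cost k t x' p y + k * (A.T - t + 1) * ‖x - x'‖ := by
  have h1 : ∀ s, A.traj p t x s = A.traj p t x' s + (x - x') := by
    intro s; unfold traj; abel
  have h2 : ∀ s, A.rcost k p t x s ≤ A.rcost k p t x' s + k * ‖x - x'‖ := by
    intro s
    unfold rcost
    rw [h1 s, add_assoc, ← mul_add]
    gcongr
    have : (s, A.traj p t x' s + (x - x')) - A.ab (p s)
      = ((s, A.traj p t x' s) - A.ab (p s)) + ((0:ℝ), x - x') := by
      ext <;> simp; ring
    rw [this]
    refine (norm_add_le _ _).trans ?_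
    simp [Prod.norm_def]
  have h3 : (∫ s in t..A.T, A.rcost k p t x s) ≤
      (∫ s in t..A.T, A.rcost k p t x' s) + (A.T - t) * (k * ‖x - x'‖) := by
    have := intervalIntegral.integral_mono_on ht (A.ii_rcost hp k t x t A.T)
      ((A.ii_rcost hp k t x' t A.T).add intervalIntegrable_const) (fun s _ => h2 s)
    rw [intervalIntegral.integral_add (A.ii_rcost hp k t x' t A.T) intervalIntegrable_const,
      intervalIntegral.integral_const, smul_eq_mul] at this
    exact this
  have h4 : ‖A.traj p t x A.T - A.e y‖ ≤ ‖A.traj p t x' A.T - A.e y‖ + ‖x - x'‖ := by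
    rw [h1, add_sub_right_comm]
    exact norm_add_le _ _
  have h5 := mul_le_mul_of_nonneg_left h4 hk
  unfold cost
  linarith

lemma rint_lower {p : ℝ → K} (hp : Measurable p) {k : ℝ} (hk : 0 ≤ k) {t t' : ℝ} (ht : t ≤ t') (s : ℝ) (x : Fin n → ℝ) :
    -(A.M * (t' - t)) ≤ ∫ σ in t..t', A.rcost k p s x σ := by
  have := intervalIntegral.integral_mono_on ht (f := fun _ => -A.M) intervalIntegrable_const
    (A.ii_rcost hp k s x t t') (fun σ _ => by
      unfold rcost
      have := (abs_le.1 (A.bc (p σ))).1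
      have : 0 ≤ k * ‖(σ, A.traj p s x σ) - A.ab (p σ)‖ := by positivity
      linarith)
  rw [intervalIntegral.integral_const, smul_eq_mul] at this
  linarith

lemma cost_lower {p : ℝ → K} (hp : Measurable p) {k : ℝ} (hk : 0 ≤ k) {t : ℝ} (ht : t ≤ A.T) (x : Fin n → ℝ) (y : Y) :
    -(A.M * (A.T - t)) - A.M ≤ A.cost k t x p y := by
  have h1 := A.rint_lower hp hk ht t x
  have h2 := (abs_le.1 (A.bd y)).1
  have : 0 ≤ k * ‖A.traj p t x A.T - A.e y‖ := by positivity
  unfold cost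
  linarith

lemma V_le {p : ℝ → K} (hp : Measurable p) {k : ℝ} (hk : 0 ≤ k) {t : ℝ} (ht : t ≤ A.T) (x : Fin n → ℝ) (y : Y) :
    A.V k t x ≤ A.cost k t x p y := by
  refine ciInf_le (f := fun θ : {p : ℝ → K // Measurable p} × Y => A.cost k t x θ.1 θ.2)
    ⟨-(A.M * (A.T - t)) - A.M, ?_⟩ (⟨⟨p, hp⟩, y⟩ : {p : ℝ → K // Measurable p} × Y)
  rintro _ ⟨θ, rfl⟩
  exact A.cost_lower θ.1.2 hk ht x θ.2

lemma V_drop {p : ℝ → K} (hp : Measurable p) {k : ℝ} (hk : 0 ≤ k) {t t' : ℝ} (htt : t ≤ t') (ht : t' ≤ A.T) (x : Fin n → ℝ)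
    (y : Y) : A.V k t' (A.traj p t x t') ≤ A.cost k t x p y + A.M * (t' - t) := by
  have h1 := A.V_le hp hk ht (A.traj p t x t') y
  have h2 := A.rint_lower hp hk htt t x
  rw [A.cost_split hp k t t' x y]
  linarith

variable [Nonempty K] [Nonempty Y]

lemma le_V {k t : ℝ} {x : Fin n → ℝ} {D : ℝ}
    (h : ∀ p : ℝ → K, Measurable p → ∀ y, D ≤ A.cost k t x p y) : D ≤ A.V k t x := by
  haveI : Nonempty {p : ℝ → K // Measurable p} :=
    ⟨⟨fun _ => Classical.arbitrary K, measurable_const⟩⟩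
  exact le_ciInf fun θ => h θ.1 θ.1.2 θ.2

lemma V_lip {k : ℝ} (hk : 0 ≤ k) {t : ℝ} (ht : t ≤ A.T) (x x' : Fin n → ℝ) :
    A.V k t x ≤ A.V k t x' + k * (A.T - t + 1) * ‖x - x'‖ := by
  rw [← sub_le_iff_le_add]
  refine A.le_V fun p hp y => ?_
  have h1 := A.V_le hp hk ht x y
  have h2 := A.cost_lip hp hk ht x x' y
  linarith

lemma V_step {k : ℝ} (hk : 0 ≤ k) {t t' : ℝ} (htt : t ≤ t') (ht : t' ≤ A.T) (x : Fin n → ℝ)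
    (q : K) (D : ℝ) (hD : ∀ s ∈ Icc t t', ‖(s, x + (s - t) • A.φ q) - A.ab q‖ ≤ D) :
    A.V k t x ≤ (t' - t) * (A.c q + k * D) + A.V k t' (x + (t' - t) • A.φ q) := by
  rw [← sub_le_iff_le_add']
  refine A.le_V fun p hp y => ?_
  let p' : ℝ → K := fun s => if s ≤ t' then q else p s
  have hp' : Measurable p' := Measurable.ite measurableSet_Iic measurable_const hp
  have h0 : ∀ s ∈ Icc t t', A.traj p' t x s = x + (s - t) • A.φ q := by
    intro s hs
    unfold traj
    congr 1
    rw [← intervalIntegral.integral_const]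
    refine intervalIntegral.integral_congr fun σ hσ => ?_
    rw [uIcc_of_le hs.1] at hσ
    simp [p', hσ.2.trans hs.2]
  have h1 := A.V_le hp' hk (htt.trans ht) x y
  rw [A.cost_split hp' k t t' x y, h0 t' ⟨htt, le_rfl⟩] at h1
  have h2 : ∫ s in t..t', A.rcost k p' t x s ≤ (t' - t) * (A.c q + k * D) := by
    have := intervalIntegral.integral_mono_on htt (A.ii_rcost hp' k t x t t')
      (g := fun _ => A.c q + k * D) intervalIntegrable_const (fun s hs => by
        unfold rcost
        rw [h0 s hs]
        have : p' s = q := by simp [p', hs.2]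
        rw [this]
        gcongr
        exact hD s hs)
    rwa [intervalIntegral.integral_const, smul_eq_mul] at this
  have h3 : A.cost k t' (x + (t' - t) • A.φ q) p' y = A.cost k t' (x + (t' - t) • A.φ q) p y := by
    set z := x + (t' - t) • A.φ q
    have h4 : ∀ s, t' ≤ s → A.traj p' t' z s = A.traj p t' z s := by
      intro s hs
      unfold traj
      congr 1
      refine intervalIntegral.integral_congr_ae (Eventually.of_forall fun σ hσ => ?_)
      rw [uIoc_of_le hs] at hσ
      simp [p', not_le.2 hσ.1]
    unfold cost
    rw [h4 _ ht]
    congr 1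
    refine intervalIntegral.integral_congr_ae (Eventually.of_forall fun σ hσ => ?_)
    rw [uIoc_of_le ht] at hσ
    unfold rcost
    rw [h4 σ hσ.1.le]
    simp [p', not_le.2 hσ.1]
  rw [h3] at h1
  linarith

lemma V_term {k : ℝ} (hk : 0 ≤ k) (x : Fin n → ℝ) (y : Y) :
    A.V k A.T x ≤ A.d y + k * ‖x - A.e y‖ := by
  have h := A.V_le (p := fun _ => Classical.arbitrary K) measurable_const hk le_rfl x y
  simpa [cost, traj] using h

end Dat
namespace Dat
variable {n : ℕ} {K Y : Type} [MeasurableSpace K] (A : Dat n K Y) [Nonempty K] [Nonempty Y]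

/-- time Lipschitz constant -/
def tc (k R : ℝ) : ℝ := A.M + k * (R + (A.T + 1) * A.M + (A.T + 1) + A.M) + k * (A.T + 2) * A.M

lemma tc_nonneg {k R : ℝ} (hk : 0 ≤ k) (hR : 0 ≤ R) : 0 ≤ A.tc k R := by
  have := A.hM
  have := A.hT
  unfold tc
  positivity

lemma V_time_up {k R : ℝ} (hk : 0 ≤ k) {t t' : ℝ} (h1 : -1 ≤ t) (htt : t ≤ t')
    (ht : t' ≤ A.T) (x : Fin n → ℝ) (hx : ‖x‖ ≤ R) :
    A.V k t x ≤ A.V k t' x + A.tc k R * (t' - t) := by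
  have hM := A.hM
  have hT := A.hT
  have hR : 0 ≤ R := (norm_nonneg x).trans hx
  let q : K := Classical.arbitrary K
  have hs := A.V_step hk htt ht x q (R + (A.T + 1) * A.M + (A.T + 1) + A.M) (by
    intro s hs
    refine (norm_sub_le _ _).trans ?_
    gcongr
    · rw [Prod.norm_def]
      refine max_le ?_ ?_
      · simp only [Real.norm_eq_abs]
        have : 0 ≤ R + (A.T + 1) * A.M := by positivity
        rw [abs_le]
        constructor <;> linarith [hs.1, hs.2]
      · refine (norm_add_le _ _).trans ?_
        have : ‖(s - t) • A.φ q‖ ≤ (A.T + 1) * A.M := by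
          rw [norm_smul, Real.norm_eq_abs, abs_of_nonneg (by linarith [hs.1])]
          have := A.bφ q
          gcongr
          linarith [hs.2]
        linarith
    · exact A.bab q)
  have hl := A.V_lip hk ht (x + (t' - t) • A.φ q) x
  have hc := (abs_le.1 (A.bc q)).2
  have hn : ‖x + (t' - t) • A.φ q - x‖ ≤ (t' - t) * A.M := by
    rw [add_sub_cancel_left, norm_smul, Real.norm_eq_abs, abs_of_nonneg (by linarith)]
    have := A.bφ q
    have : 0 ≤ t' - t := by linarith
    gcongr
  have h2 : k * (A.T - t' + 1) * ‖x + (t' - t) • A.φ q - x‖ ≤ k * (A.T + 2) * ((t' - t) * A.M) := by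
    gcongr k * ?_ * ?_
    linarith
  have h3 : (t' - t) * (A.c q + k * (R + (A.T + 1) * A.M + (A.T + 1) + A.M)) ≤
      (t' - t) * (A.M + k * (R + (A.T + 1) * A.M + (A.T + 1) + A.M)) := by
    have : 0 ≤ t' - t := by linarith
    gcongr
  unfold tc
  linarith

lemma V_time_down {k R : ℝ} (hk : 0 ≤ k) {t t' : ℝ} (h1 : -1 ≤ t) (htt : t ≤ t')
    (ht : t' ≤ A.T) (x : Fin n → ℝ) (hx : ‖x‖ ≤ R) :
    A.V k t' x ≤ A.V k t x + A.tc k R * (t' - t) := by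
  have hM := A.hM
  have hT := A.hT
  have hR : 0 ≤ R := (norm_nonneg x).trans hx
  rw [← sub_le_iff_le_add]
  refine A.le_V fun p hp y => ?_
  have h2 := A.V_drop hp hk htt ht x y
  have h3 := A.V_lip hk ht x (A.traj p t x t')
  have h4 : ‖x - A.traj p t x t'‖ ≤ A.M * (t' - t) := by
    have := A.traj_dist hp t t' t x
    rw [abs_sub_comm, abs_of_nonneg (by linarith : 0 ≤ t' - t)] at this
    simpa [traj] using this
  have h5 : k * (A.T - t' + 1) * ‖x - A.traj p t x t'‖ ≤ k * (A.T + 2) * (A.M * (t' - t)) := by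
    gcongr k * ?_ * ?_
    linarith
  have h6 : 0 ≤ k * (R + (A.T + 1) * A.M + (A.T + 1) + A.M) * (t' - t) := by
    have : 0 ≤ t' - t := by linarith
    positivity
  unfold tc
  linarith

/-- clamped value function -/
def W (k : ℝ) (z : ℝ × (Fin n → ℝ)) : ℝ := A.V k (max (-1) (min z.1 A.T)) z.2

lemma W_eq (k : ℝ) {t : ℝ} (h1 : -1 ≤ t) (h2 : t ≤ A.T) (x : Fin n → ℝ) :
    A.W k (t, x) = A.V k t x := by
  simp [W, h1, h2]

lemma W_cont {k : ℝ} (hk : 0 ≤ k) : Continuous (A.W k) := by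
  have hT := A.hT
  have hcl : ∀ t : ℝ, -1 ≤ max (-1) (min t A.T) ∧ max (-1) (min t A.T) ≤ A.T := fun t =>
    ⟨le_max_left _ _, max_le (by linarith) (min_le_right _ _)⟩
  refine continuous_prod_of_continuous_lipschitzWith' _ (Real.toNNReal (k * (A.T + 2))) ?_ ?_
  · intro t
    refine LipschitzWith.of_le_add_mul _ fun x x' => ?_
    obtain ⟨h1, h2⟩ := hcl t
    have h3 := A.V_lip hk h2 x x'
    rw [Real.coe_toNNReal _ (by positivity), dist_eq_norm]
    refine h3.trans ?_
    unfold W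
    dsimp only
    gcongr _ + k * ?_ * _
    linarith
  · intro x
    have : ContinuousOn (fun t => A.V k t x) (Icc (-1) A.T) := by
      have hB := A.tc_nonneg hk (norm_nonneg x)
      refine LipschitzOnWith.continuousOn (K := Real.toNNReal (A.tc k ‖x‖)) ?_
      refine LipschitzOnWith.of_le_add_mul _ fun t ht t' ht' => ?_
      rw [Real.coe_toNNReal _ hB, Real.dist_eq]
      rcases le_total t t' with h | h
      · rw [abs_sub_comm, abs_of_nonneg (by linarith)]
        exact A.V_time_up hk ht.1 h ht'.2 x le_rfl
      · rw [abs_of_nonneg (by linarith)]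
        exact A.V_time_down hk ht'.1 h ht.2 x le_rfl
    exact this.comp_continuous (by fun_prop) (fun t => hcl t)

/-- Smooth approximate subsolution. -/
theorem exists_subsol {k : ℝ} (hk : 0 ≤ k) (x₀ : Fin n → ℝ) {ε : ℝ} (hε : 0 < ε) :
    ∃ v : ℝ × (Fin n → ℝ) → ℝ, ContDiff ℝ 1 v ∧
      (∀ q, (A.ab q).1 ∈ Icc 0 A.T → -ε ≤ fderiv ℝ v (A.ab q) (1, A.φ q) + A.c q) ∧
      (∀ y, v (A.T, A.e y) ≤ A.d y + ε) ∧ A.V k 0 x₀ - ε ≤ v (0, x₀) := by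
  have hT := A.hT
  have hM := A.hM
  set R : ℝ := A.M + ‖x₀‖ + 1 with hRdef
  have hR : 0 ≤ R := by positivity
  set B := A.tc k R with hBdef
  have hB : 0 ≤ B := A.tc_nonneg hk hR
  set Q : ℝ := k * (A.T + 2) + 2 * B + 2 * k + 1 with hQ
  have hQ0 : 0 < Q := by positivity
  obtain ⟨r, hr0, hr4, hrQ⟩ : ∃ r : ℝ, 0 < r ∧ r ≤ 1 / 4 ∧ Q * r ≤ ε := by
    refine ⟨min (1/4) (ε / Q), by positivity, min_le_left _ _, ?_⟩
    calc Q * min (1/4) (ε / Q) ≤ Q * (ε / Q) := by gcongr; exact min_le_right _ _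
      _ = ε := by field_simp
  have hkT : 0 ≤ k * (A.T + 2) := by positivity
  have hkr : 0 ≤ k * r := by positivity
  have hBr : 0 ≤ B * r := by positivity
  have hkTr : 0 ≤ k * (A.T + 2) * r := by positivity
  obtain ⟨v₀, hv₀, hA, hU, hL⟩ := mollify (A.W k) (A.W_cont hk) r hr0
  let sh : ℝ × (Fin n → ℝ) := (r, 0)
  have hy1 : ∀ y : ℝ × (Fin n → ℝ), ‖y‖ < r → |y.1| < r ∧ ‖y.2‖ < r := by
    intro y hy
    rw [Prod.norm_def, max_lt_iff] at hy
    exact hy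
  refine ⟨fun z => v₀ (z - sh), hv₀.comp (by fun_prop), ?_, ?_, ?_⟩
  · intro q hq
    set z := A.ab q with hz
    let ξ : ℝ × (Fin n → ℝ) := (1, A.φ q)
    set v : ℝ × (Fin n → ℝ) → ℝ := fun z => v₀ (z - sh) with hv
    have hvd : Differentiable ℝ v :=
      (hv₀.comp (by fun_prop : ContDiff ℝ 1 fun z => z - sh)).differentiable (by norm_num)
    have key : ∀ σ : ℝ, 0 ≤ σ → σ ≤ 1/4 →
        v (z - σ • ξ) ≤ v z + σ * (A.c q + k * (2 * r + σ * (1 + A.M))) := by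
      intro σ h0 h4
      refine hA _ _ _ fun y hy => ?_
      obtain ⟨ha, hb⟩ := hy1 y hy
      rw [abs_lt] at ha
      have e1 : z - σ • ξ - sh + y = (z.1 - σ - r + y.1, z.2 - σ • A.φ q + y.2) := by
        ext <;> simp [ξ, sh]
      have e2 : z - sh + y = (z.1 - r + y.1, z.2 + y.2) := by
        ext <;> simp [sh]
      rw [e1, e2, A.W_eq k (by linarith [hq.1]) (by linarith [hq.2]),
        A.W_eq k (by linarith [hq.1]) (by linarith [hq.2])]
      have hst := A.V_step hk (t := z.1 - σ - r + y.1) (t' := z.1 - r + y.1) (by linarith)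
        (by linarith [hq.2]) (z.2 - σ • A.φ q + y.2) q (2 * r + σ * (1 + A.M)) (by
          intro s hs
          rw [← hz]
          have hσM : 0 ≤ σ * A.M := by positivity
          rw [Prod.norm_def]
          refine max_le ?_ ?_
          · simp only [Prod.fst_sub, Real.norm_eq_abs]
            rw [abs_le]
            constructor <;> linarith [hs.1, hs.2]
          · simp only [Prod.snd_sub]
            set τ := s - (z.1 - σ - r + y.1)
            have : z.2 - σ • A.φ q + y.2 + τ • A.φ q - z.2 = y.2 - (σ - τ) • A.φ q := by
              module
            rw [this]
            refine (norm_sub_le _ _).trans ?_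
            have hτ : 0 ≤ σ - τ ∧ σ - τ ≤ σ := by
              constructor <;> simp only [τ] <;> linarith [hs.1, hs.2]
            have : ‖(σ - τ) • A.φ q‖ ≤ σ * A.M := by
              rw [norm_smul, Real.norm_eq_abs, abs_of_nonneg hτ.1]
              have := A.bφ q
              gcongr
              exact hτ.2
            linarith)
      have e3 : z.1 - r + y.1 - (z.1 - σ - r + y.1) = σ := by ring
      rw [e3] at hst
      have e4 : z.2 - σ • A.φ q + y.2 + σ • A.φ q = z.2 + y.2 := by abel
      rw [e4] at hst
      linarith
    have hder : HasDerivAt (fun σ : ℝ => v (z - σ • ξ)) (-(fderiv ℝ v z ξ)) 0 := by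
      have h1 : HasDerivAt (fun σ : ℝ => z - σ • ξ) (-((1:ℝ) • ξ)) 0 :=
        ((hasDerivAt_id (0:ℝ)).smul_const ξ).const_sub z
      have h2 : HasFDerivAt v (fderiv ℝ v z) (z - (0:ℝ) • ξ) := by
        simpa using (hvd z).hasFDerivAt
      have := h2.comp_hasDerivAt (0:ℝ) h1
      simp only [one_smul, map_neg] at this
      exact this
    have hlim : Tendsto (fun σ : ℝ => σ⁻¹ * (v (z - σ • ξ) - v z)) (𝓝[>] 0)
        (𝓝 (-(fderiv ℝ v z ξ))) := by
      have := hder.tendsto_slope_zero_right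
      simpa using this
    have hlim2 : Tendsto (fun σ : ℝ => A.c q + k * (2 * r + σ * (1 + A.M))) (𝓝[>] 0)
        (𝓝 (A.c q + k * (2 * r + 0 * (1 + A.M)))) := by
      refine Tendsto.mono_left ?_ nhdsWithin_le_nhds
      exact Continuous.tendsto (by fun_prop) 0
    have hle := le_of_tendsto_of_tendsto hlim hlim2 (by
      have : Ioc (0:ℝ) (1/4) ∈ 𝓝[>] (0:ℝ) := Ioc_mem_nhdsGT (by norm_num)
      filter_upwards [this] with σ hσ
      have := key σ hσ.1.le hσ.2
      rw [inv_mul_le_iff₀ hσ.1]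
      linarith)
    have : k * (2 * r) ≤ ε := by
      rw [hQ] at hrQ
      linarith
    change -ε ≤ fderiv ℝ v z ξ + A.c q
    linarith
  · intro y
    refine hU _ _ fun w hw => ?_
    obtain ⟨ha, hb⟩ := hy1 w hw
    rw [abs_lt] at ha
    have e1 : (A.T, A.e y) - sh + w = (A.T - r + w.1, A.e y + w.2) := by
      ext <;> simp [sh]
    rw [e1, A.W_eq k (by linarith) (by linarith)]
    have h1 := A.V_time_up hk (t := A.T - r + w.1) (t' := A.T) (R := R) (by linarith) (by linarith)
      le_rfl (A.e y + w.2) (by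
        refine (norm_add_le _ _).trans ?_
        have := A.be y
        have := norm_nonneg x₀
        rw [hRdef]; linarith)
    have h2 := A.V_term hk (A.e y + w.2) y
    rw [add_sub_cancel_left] at h2
    have h3 : k * ‖w.2‖ ≤ k * r := by gcongr
    have h4 : A.tc k R * (A.T - (A.T - r + w.1)) ≤ B * (2 * r) := by
      rw [← hBdef]; gcongr; linarith
    rw [hQ] at hrQ
    linarith
  · refine hL _ _ fun w hw => ?_
    obtain ⟨ha, hb⟩ := hy1 w hw
    rw [abs_lt] at ha
    have e1 : ((0:ℝ), x₀) - sh + w = (0 - r + w.1, x₀ + w.2) := by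
      ext <;> simp [sh]
    rw [e1, A.W_eq k (by linarith) (by linarith)]
    have h1 := A.V_time_down hk (t := 0 - r + w.1) (t' := 0) (R := R) (by linarith) (by linarith)
      hT.le (x₀ + w.2) (by
        refine (norm_add_le _ _).trans ?_
        rw [hRdef]; linarith)
    have h2 := A.V_lip hk hT.le x₀ (x₀ + w.2)
    have h3 : k * (A.T - 0 + 1) * ‖x₀ - (x₀ + w.2)‖ ≤ k * (A.T + 2) * r := by
      have : ‖x₀ - (x₀ + w.2)‖ ≤ r := by
        rw [sub_add_cancel_left, norm_neg]; exact hb.le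
      gcongr k * ?_ * ?_
      linarith
    have h4 : A.tc k R * (0 - (0 - r + w.1)) ≤ B * (2 * r) := by
      rw [← hBdef]; gcongr; linarith
    rw [hQ] at hrQ
    linarith
end Dat

lemma modulus {Z F : Type*} [NormedAddCommGroup Z] [NormedAddCommGroup F] {K : Set Z}
    (hK : IsCompact K) {G : Z → F} (hG : ContinuousOn G K) {ε : ℝ} (hε : 0 < ε) :
    ∃ C, 0 ≤ C ∧ ∀ z ∈ K, ∀ z' ∈ K, ‖G z - G z'‖ ≤ ε + C * ‖z - z'‖ := by
  have huc := hK.uniformContinuousOn_of_continuous hG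
  rw [Metric.uniformContinuousOn_iff] at huc
  obtain ⟨δ, hδ, h1⟩ := huc ε hε
  obtain ⟨B, hB⟩ := hK.exists_bound_of_continuousOn hG
  refine ⟨2 * |B| / δ, by positivity, fun z hz z' hz' => ?_⟩
  by_cases hd : dist z z' < δ
  · have := h1 z hz z' hz' hd
    rw [dist_eq_norm] at this
    have : 0 ≤ 2 * |B| / δ * ‖z - z'‖ := by positivity
    linarith
  · rw [not_lt, dist_eq_norm] at hd
    have h2 : ‖G z - G z'‖ ≤ 2 * |B| := by
      have := hB z hz
      have := hB z' hz'
      have := norm_sub_le (G z) (G z')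
      have := le_abs_self B
      linarith
    have h3 : 2 * |B| ≤ 2 * |B| / δ * ‖z - z'‖ := by
      rw [div_mul_eq_mul_div, le_div_iff₀ hδ]
      gcongr
    linarith

lemma arzela {E : Type*} [NormedAddCommGroup E] [ProperSpace E] (T : ℝ) (hT : 0 < T)
    (γ : ℕ → ℝ → E) (x₀ : E) (M : ℝ) (h0 : ∀ k, γ k 0 = x₀)
    (hM : ∀ k s s', ‖γ k s' - γ k s‖ ≤ M * |s' - s|) :
    ∃ (Γ : ℝ → E) (ψ : ℕ → ℕ), StrictMono ψ ∧ Continuous Γ ∧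
      ∀ ε > 0, ∀ᶠ k in atTop, ∀ s ∈ Icc (0:ℝ) T, ‖Γ s - γ (ψ k) s‖ ≤ ε := by
  have hM0 : 0 ≤ M := by
    have := hM 0 0 1
    have h2 := norm_nonneg (γ 0 1 - γ 0 0)
    simp at this
    linarith
  have hlip : ∀ k, LipschitzWith (Real.toNNReal M) (fun s : Icc (0:ℝ) T => γ k s) := by
    intro k
    refine LipschitzWith.of_dist_le_mul fun s s' => ?_
    rw [Real.coe_toNNReal _ hM0, dist_eq_norm, Subtype.dist_eq, Real.dist_eq]
    exact hM k _ _
  let g : ℕ → BoundedContinuousFunction (Icc (0:ℝ) T) E := fun k =>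
    BoundedContinuousFunction.mkOfCompact ⟨_, (hlip k).continuous⟩
  have hcomp : IsCompact (closure (range g)) := by
    refine BoundedContinuousFunction.arzela_ascoli (Metric.closedBall x₀ (M * T))
      (isCompact_closedBall _ _) _ ?_ ?_
    · rintro _ s ⟨k, rfl⟩
      rw [Metric.mem_closedBall, dist_eq_norm]
      have h := hM k 0 s
      rw [h0] at h
      refine h.trans ?_
      gcongr
      rw [sub_zero, abs_of_nonneg s.2.1]
      exact s.2.2
    · refine UniformEquicontinuous.equicontinuous ?_
      refine LipschitzWith.uniformEquicontinuous _ (Real.toNNReal M) ?_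
      rintro ⟨_, k, rfl⟩
      exact hlip k
  obtain ⟨Γ, -, ψ, hψ, hlim⟩ := hcomp.tendsto_subseq (fun k => subset_closure (mem_range_self k))
  refine ⟨fun s => Γ (projIcc 0 T hT.le s), ψ, hψ, Γ.continuous.comp continuous_projIcc, ?_⟩
  intro ε hε
  rw [Metric.tendsto_nhds] at hlim
  filter_upwards [hlim ε hε] with k hk s hs
  rw [projIcc_of_mem _ hs]
  have h1 := BoundedContinuousFunction.dist_coe_le_dist (f := Γ) (g := g (ψ k)) ⟨s, hs⟩
  rw [dist_eq_norm] at h1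
  refine h1.trans ?_
  rw [dist_comm]
  exact hk.le

/-- coordinatewise clamp -/
def clampU {m : ℕ} (u : Fin m → ℝ) : Fin m → ℝ := fun j => max (-1) (min (u j) 1)

lemma clampU_cont {m : ℕ} : Continuous (clampU (m := m)) := by
  unfold clampU; fun_prop

lemma clampU_mem {m : ℕ} (u : Fin m → ℝ) : clampU u ∈ Ubox m :=
  ⟨fun _ => le_max_left _ _, fun _ => max_le (by norm_num) (min_le_right _ _)⟩

lemma clampU_eq {m : ℕ} {u : Fin m → ℝ} (hu : u ∈ Ubox m) : clampU u = u := by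
  funext j
  have h1 := hu.1 j
  have h2 := hu.2 j
  simp only at h1 h2
  simp [clampU, h1, h2]

lemma Ubox_closed (m : ℕ) : IsClosed (Ubox m) := isClosed_Icc
lemma Ubox_compact (m : ℕ) : IsCompact (Ubox m) := isCompact_Icc
lemma Ubox_convex (m : ℕ) : Convex ℝ (Ubox m) := convex_Icc _ _

lemma L2_lemma {m : ℕ} {E : Type*} [NormedAddCommGroup E] [NormedSpace ℝ E] [CompleteSpace E]
    [SecondCountableTopology E]
    (T : ℝ)
    (G : ℝ × (Fin m → ℝ) → E) (hG : Continuous G) (CG : ℝ) (hCG : ∀ z, ‖G z‖ ≤ CG)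
    (hGa : ∀ s ∈ Icc 0 T, ∀ u ∈ Ubox m, ∀ v ∈ Ubox m, ∀ a b : ℝ, 0 ≤ a → 0 ≤ b → a + b = 1 →
      G (s, a • u + b • v) = a • G (s, u) + b • G (s, v))
    (ℓ : ℝ × (Fin m → ℝ) → ℝ) (hℓ : Continuous ℓ) (Cℓ : ℝ) (hCℓ : ∀ z, ‖ℓ z‖ ≤ Cℓ)
    (hℓa : ∀ s ∈ Icc 0 T, ∀ u ∈ Ubox m, ∀ v ∈ Ubox m, ∀ a b : ℝ, 0 ≤ a → 0 ≤ b → a + b = 1 →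
      ℓ (s, a • u + b • v) ≤ a * ℓ (s, u) + b * ℓ (s, v))
    (β : ℝ → E) (c : ℝ)
    (hap : ∀ ε > 0, ∃ u : ℝ → Fin m → ℝ, Measurable u ∧ (∀ s, u s ∈ Ubox m) ∧
      (∀ t ∈ Icc 0 T, ‖β t - ∫ s in Icc 0 t, G (s, u s)‖ ≤ ε) ∧
      ∫ s in Icc 0 T, ℓ (s, u s) ≤ c + ε) :
    ∃ u : ℝ → Fin m → ℝ, Measurable u ∧ (∀ s, u s ∈ Ubox m) ∧
      (∀ t ∈ Icc 0 T, β t = ∫ s in Icc 0 t, G (s, u s)) ∧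
      ∫ s in Icc 0 T, ℓ (s, u s) ≤ c := by
  set μ : Measure ℝ := volume.restrict (Icc 0 T) with hμ
  let L := Lp (EuclideanSpace ℝ (Fin m)) 2 μ
  -- integrability and continuity tools
  have hac : ∀ t ∈ Icc 0 T, ∀ {P : ℝ → Prop}, (∀ᵐ s ∂μ, P s) →
      ∀ᵐ s ∂(volume.restrict (Icc 0 t)), P s := by
    intro t ht P hP
    exact ae_mono (Measure.restrict_mono (Icc_subset_Icc_right ht.2) le_rfl) hP
  have hms : ∀ w : L, Measurable fun s => (w s).ofLp := by
    intro w
    exact (WithLp.measurable_ofLp _ _).comp (Lp.stronglyMeasurable w).measurable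
  have hint : ∀ w : L, ∀ t, IntegrableOn (fun s => G (s, (w s).ofLp)) (Icc 0 t) := by
    intro w t
    exact Measure.integrableOn_of_bounded (M := CG) (by simp)
      (hG.stronglyMeasurable.comp_measurable
        (measurable_id.prodMk (hms w))).aestronglyMeasurable (Eventually.of_forall fun _ => hCG _)
  have hintℓ : ∀ w : L, ∀ t, IntegrableOn (fun s => ℓ (s, (w s).ofLp)) (Icc 0 t) := by
    intro w t
    exact Measure.integrableOn_of_bounded (M := Cℓ) (by simp)
      (hℓ.stronglyMeasurable.comp_measurable
        (measurable_id.prodMk (hms w))).aestronglyMeasurable (Eventually.of_forall fun _ => hCℓ _)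
  let S : ℕ → Set L := fun j => {w | (∀ᵐ s ∂μ, (w s).ofLp ∈ Ubox m) ∧
    (∀ t ∈ Icc 0 T, ‖β t - ∫ s in Icc 0 t, G (s, (w s).ofLp)‖ ≤ 1 / ((j:ℝ) + 1)) ∧
      ∫ s in Icc 0 T, ℓ (s, (w s).ofLp) ≤ c + 1 / ((j:ℝ) + 1)}
  obtain ⟨R, hR⟩ : ∃ R, ∀ u ∈ Ubox m, ‖(WithLp.toLp 2 u : EuclideanSpace ℝ (Fin m))‖ ≤ R :=
    (Ubox_compact m).exists_bound_of_continuousOn (PiLp.continuous_toLp 2 _).continuousOn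
  have hIcc : ∀ᵐ s ∂μ, s ∈ Icc 0 T := ae_restrict_mem measurableSet_Icc
  obtain ⟨w, hw⟩ := hilbert_inter S
    (by
      intro i j hij w hw
      have : 1 / ((j:ℝ) + 1) ≤ 1 / ((i:ℝ) + 1) := by
        gcongr
      exact ⟨hw.1, fun t ht => (hw.2.1 t ht).trans this, hw.2.2.trans (by linarith)⟩)
    (by
      intro j
      obtain ⟨u, hu, huU, hu1, hu2⟩ := hap (1 / ((j:ℝ) + 1)) (by positivity)
      have hmem : MemLp (fun s => (WithLp.toLp 2 (u s) : EuclideanSpace ℝ (Fin m))) 2 μ := by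
        refine MemLp.of_bound ?_ R (Eventually.of_forall fun s => hR _ (huU s))
        exact ((WithLp.measurable_toLp _ _).comp hu).aestronglyMeasurable
      have hae := hmem.coeFn_toLp
      have hae' : ∀ᵐ s ∂μ, ((hmem.toLp _) s).ofLp = u s := by
        filter_upwards [hae] with s hs
        rw [hs]
      refine ⟨hmem.toLp _, ?_, ?_, ?_⟩
      · filter_upwards [hae'] with s hs
        rw [hs]; exact huU s
      · intro t ht
        have : ∫ s in Icc 0 t, G (s, ((hmem.toLp _) s).ofLp) = ∫ s in Icc 0 t, G (s, u s) := by
          refine integral_congr_ae ?_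
          filter_upwards [hac t ht hae'] with s hs
          rw [hs]
        rw [this]; exact hu1 t ht
      · have : ∫ s in Icc 0 T, ℓ (s, ((hmem.toLp _) s).ofLp) = ∫ s in Icc 0 T, ℓ (s, u s) := by
          refine integral_congr_ae ?_
          filter_upwards [hae'] with s hs
          rw [hs]
        rw [this]; exact hu2)
    (by
      intro j
      refine IsSeqClosed.isClosed ?_
      intro ws w hws hlim
      obtain ⟨ψ, -, hψ⟩ := (tendstoInMeasure_of_tendsto_Lp hlim).exists_seq_tendsto_ae
      have hψ' : ∀ᵐ s ∂μ, Tendsto (fun i => (ws (ψ i) s).ofLp) atTop (𝓝 (w s).ofLp) := by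
        filter_upwards [hψ] with s hs
        exact ((PiLp.continuous_ofLp 2 _).tendsto _).comp hs
      refine ⟨?_, ?_, ?_⟩
      · have : ∀ᵐ s ∂μ, ∀ i, (ws (ψ i) s).ofLp ∈ Ubox m := ae_all_iff.2 fun i => (hws _).1
        filter_upwards [this, hψ'] with s h1 h2
        exact (Ubox_closed m).mem_of_tendsto h2 (Eventually.of_forall h1)
      · intro t ht
        have hl : Tendsto (fun i => ∫ s in Icc 0 t, G (s, (ws (ψ i) s).ofLp)) atTop
            (𝓝 (∫ s in Icc 0 t, G (s, (w s).ofLp))) := by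
          refine tendsto_integral_of_dominated_convergence (fun _ => CG)
            (fun i => (hint _ t).aestronglyMeasurable) (integrable_const _)
            (fun i => Eventually.of_forall fun s => hCG _) ?_
          filter_upwards [hac t ht hψ'] with s hs
          exact (hG.tendsto _).comp (tendsto_const_nhds.prodMk_nhds hs)
        exact le_of_tendsto' (tendsto_const_nhds.sub hl).norm fun i => (hws _).2.1 t ht
      · have hl : Tendsto (fun i => ∫ s in Icc 0 T, ℓ (s, (ws (ψ i) s).ofLp)) atTop
            (𝓝 (∫ s in Icc 0 T, ℓ (s, (w s).ofLp))) := by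
          refine tendsto_integral_of_dominated_convergence (fun _ => Cℓ)
            (fun i => (hintℓ _ T).aestronglyMeasurable) (integrable_const _)
            (fun i => Eventually.of_forall fun s => hCℓ _) ?_
          filter_upwards [hψ'] with s hs
          exact (hℓ.tendsto _).comp (tendsto_const_nhds.prodMk_nhds hs)
        exact le_of_tendsto' hl fun i => (hws _).2.2)
    (by
      intro j w₁ h₁ w₂ h₂ a b ha hb hab
      have hco : ∀ᵐ s ∂μ, ((a • w₁ + b • w₂ : L) s).ofLp = a • (w₁ s).ofLp + b • (w₂ s).ofLp := by
        filter_upwards [Lp.coeFn_add (a • w₁) (b • w₂), Lp.coeFn_smul a w₁, Lp.coeFn_smul b w₂]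
          with s e1 e2 e3
        rw [e1, Pi.add_apply, e2, e3]
        simp
      refine ⟨?_, ?_, ?_⟩
      · filter_upwards [hco, h₁.1, h₂.1] with s e1 e2 e3
        rw [e1]
        exact Ubox_convex m e2 e3 ha hb hab
      · intro t ht
        have : ∫ s in Icc 0 t, G (s, ((a • w₁ + b • w₂ : L) s).ofLp) =
            a • (∫ s in Icc 0 t, G (s, (w₁ s).ofLp)) + b • ∫ s in Icc 0 t, G (s, (w₂ s).ofLp) := by
          have i1 : IntegrableOn (fun s => a • G (s, (w₁ s).ofLp)) (Icc 0 t) := (hint w₁ t).smul a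
          have i2 : IntegrableOn (fun s => b • G (s, (w₂ s).ofLp)) (Icc 0 t) := (hint w₂ t).smul b
          rw [← integral_smul, ← integral_smul, ← integral_add i1 i2]
          refine integral_congr_ae ?_
          filter_upwards [hac t ht hco, hac t ht h₁.1, hac t ht h₂.1, hac t ht hIcc] with s e1 e2 e3 e4
          rw [e1, hGa s e4 _ e2 _ e3 a b ha hb hab]
        rw [this]
        have e : β t - (a • (∫ s in Icc 0 t, G (s, (w₁ s).ofLp)) +
            b • ∫ s in Icc 0 t, G (s, (w₂ s).ofLp)) =
            a • (β t - ∫ s in Icc 0 t, G (s, (w₁ s).ofLp)) +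
            b • (β t - ∫ s in Icc 0 t, G (s, (w₂ s).ofLp)) := by
          have : β t = (a + b) • β t := by rw [hab, one_smul]
          conv_lhs => rw [this]
          module
        rw [e]
        refine (norm_add_le _ _).trans ?_
        rw [norm_smul, norm_smul, Real.norm_eq_abs, Real.norm_eq_abs, abs_of_nonneg ha,
          abs_of_nonneg hb]
        calc _ ≤ a * (1 / ((j:ℝ) + 1)) + b * (1 / ((j:ℝ) + 1)) := by
              gcongr
              · exact h₁.2.1 t ht
              · exact h₂.2.1 t ht
          _ = 1 / ((j:ℝ) + 1) := by rw [← add_mul, hab, one_mul]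
      · have : ∫ s in Icc 0 T, ℓ (s, ((a • w₁ + b • w₂ : L) s).ofLp) ≤
            a * (∫ s in Icc 0 T, ℓ (s, (w₁ s).ofLp)) + b * ∫ s in Icc 0 T, ℓ (s, (w₂ s).ofLp) := by
          rw [← integral_const_mul, ← integral_const_mul,
            ← integral_add ((hintℓ w₁ T).const_mul a) ((hintℓ w₂ T).const_mul b)]
          refine integral_mono_ae (hintℓ _ T)
            (((hintℓ w₁ T).const_mul a).add ((hintℓ w₂ T).const_mul b)) ?_
          filter_upwards [hco, h₁.1, h₂.1, hIcc] with s e1 e2 e3 e4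
          rw [e1]
          exact hℓa s e4 _ e2 _ e3 a b ha hb hab
        refine this.trans ?_
        calc _ ≤ a * (c + 1 / ((j:ℝ) + 1)) + b * (c + 1 / ((j:ℝ) + 1)) := by
              gcongr
              · exact h₁.2.2
              · exact h₂.2.2
          _ = c + 1 / ((j:ℝ) + 1) := by rw [← add_mul, hab, one_mul])
    ((measureUnivNNReal μ : ℝ) ^ (2⁻¹ : ℝ) * R)
    (by
      intro j w hw
      have hR0 : 0 ≤ R := (norm_nonneg _).trans (hR _ (clampU_mem 0))
      have := Lp.norm_le_of_ae_bound (f := w) (C := R) hR0 (by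
        filter_upwards [hw.1] with s hs
        exact hR _ hs)
      simpa using this)
  refine ⟨fun s => clampU (w s).ofLp, clampU_cont.measurable.comp (hms w),
    fun s => clampU_mem _, ?_, ?_⟩
  · intro t ht
    have : ∫ s in Icc 0 t, G (s, clampU (w s).ofLp) = ∫ s in Icc 0 t, G (s, (w s).ofLp) := by
      refine integral_congr_ae ?_
      filter_upwards [hac t ht (hw 0).1] with s hs
      rw [clampU_eq hs]
    rw [this, ← sub_eq_zero, ← norm_le_zero_iff]
    exact ge_of_tendsto' (tendsto_one_div_add_atTop_nhds_zero_nat (𝕜 := ℝ))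
      fun j => (hw j).2.1 t ht
  · have : ∫ s in Icc 0 T, ℓ (s, clampU (w s).ofLp) = ∫ s in Icc 0 T, ℓ (s, (w s).ofLp) := by
      refine integral_congr_ae ?_
      filter_upwards [(hw 0).1] with s hs
      rw [clampU_eq hs]
    rw [this]
    have hl := (tendsto_const_nhds (x := c)).add (tendsto_one_div_add_atTop_nhds_zero_nat (𝕜 := ℝ))
    rw [add_zero] at hl
    exact ge_of_tendsto' hl fun j => (hw j).2.2

/-- The compact constraint set. -/
abbrev KK {n : ℕ} (m : ℕ) (T : ℝ) (X : Set (Fin n → ℝ)) : Set (ℝ × (Fin n → ℝ) × (Fin m → ℝ)) :=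
  Icc (0 : ℝ) T ×ˢ X ×ˢ Ubox m

lemma KK_compact {n m : ℕ} {T : ℝ} {X : Set (Fin n → ℝ)} (hX : IsCompact X) :
    IsCompact (KK m T X) := isCompact_Icc.prod (hX.prod (Ubox_compact m))

lemma Fvec_contOn {n m : ℕ} {T : ℝ} (X : Set (Fin n → ℝ))
    {f : ℝ × (Fin n → ℝ) → Fin n → ℝ} {g : ℝ × (Fin n → ℝ) → Fin n → Fin m → ℝ}
    (hf : ContinuousOn f (Set.Icc (0 : ℝ) T ×ˢ Set.univ))
    (hg : ContinuousOn g (Set.Icc (0 : ℝ) T ×ˢ Set.univ)) :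
    ContinuousOn (Fvec f g) (KK m T X) := by
  have hmap : MapsTo (fun z : ℝ × (Fin n → ℝ) × (Fin m → ℝ) => (z.1, z.2.1)) (KK m T X)
      (Set.Icc (0 : ℝ) T ×ˢ Set.univ) := fun z hz => ⟨hz.1, trivial⟩
  have hpr : ContinuousOn (fun z : ℝ × (Fin n → ℝ) × (Fin m → ℝ) => (z.1, z.2.1)) (KK m T X) := by
    fun_prop
  have hf' := hf.comp hpr hmap
  have hg' := hg.comp hpr hmap
  rw [continuousOn_pi] at hf' hg' ⊢
  intro k
  have hgk := hg' k
  rw [continuousOn_pi] at hgk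
  unfold Fvec
  refine (hf' k).add (continuousOn_finsetSum _ fun j _ => (hgk j).mul ?_)
  fun_prop

lemma Fvec_affine {n m : ℕ} 
    (f : ℝ × (Fin n → ℝ) → Fin n → ℝ) (g : ℝ × (Fin n → ℝ) → Fin n → Fin m → ℝ)
    (s : ℝ) (x : Fin n → ℝ) (u v : Fin m → ℝ) (a b : ℝ) (hab : a + b = 1) :
    Fvec f g (s, x, a • u + b • v) = a • Fvec f g (s, x, u) + b • Fvec f g (s, x, v) := by
  funext k
  simp only [Fvec, Pi.add_apply, Pi.smul_apply, smul_eq_mul, mul_add, Finset.sum_add_distrib,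
    Finset.mul_sum]
  have : f (s, x) k = a * f (s, x) k + b * f (s, x) k := by rw [← add_mul, hab, one_mul]
  have e1 : ∀ j, g (s, x) k j * (a * u j) = a * (g (s, x) k j * u j) := fun j => by ring
  have e2 : ∀ j, g (s, x) k j * (b * v j) = b * (g (s, x) k j * v j) := fun j => by ring
  simp only [e1, e2]
  linarith

lemma ii_Icc {E : Type*} [NormedAddCommGroup E] [NormedSpace ℝ E] (F : ℝ → E) {t : ℝ}
    (ht : 0 ≤ t) : ∫ s in (0:ℝ)..t, F s = ∫ s in Icc 0 t, F s := by
  rw [intervalIntegral.integral_of_le ht, integral_Icc_eq_integral_Ioc]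

theorem compactness {n m : ℕ} (T : ℝ) (hT : 0 < T)
    (X XT : Set (Fin n → ℝ)) (hX : IsCompact X) (hXT : IsCompact XT)
    (x₀ : Fin n → ℝ) (hx₀ : x₀ ∈ X)
    (f : ℝ × (Fin n → ℝ) → Fin n → ℝ) (g : ℝ × (Fin n → ℝ) → Fin n → Fin m → ℝ)
    (hf : ContinuousOn f (Set.Icc (0 : ℝ) T ×ˢ Set.univ))
    (hg : ContinuousOn g (Set.Icc (0 : ℝ) T ×ˢ Set.univ))
    (h : ℝ × (Fin n → ℝ) × (Fin m → ℝ) → ℝ) (H : (Fin n → ℝ) → ℝ)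
    (hh : Continuous h) (hH : Continuous H)
    (hconv : ∀ (t : ℝ) (x : Fin n → ℝ),
      ConvexOn ℝ Set.univ (fun u : Fin m → ℝ => h (t, x, u)))
    [Nonempty (KK m T X)] [Nonempty XT]
    (A : Dat n (KK m T X) XT) (hAT : A.T = T) (hφ : ∀ q, A.φ q = Fvec f g q)
    (hab : ∀ q, A.ab q = (q.1.1, q.1.2.1)) (hc : ∀ q, A.c q = h q) (he : ∀ y, A.e y = y)
    (hd : ∀ y, A.d y = H y) (c0 : ℝ) (hV : ∀ k : ℕ, A.V k 0 x₀ < c0) :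
    ∃ x u, IsAdmissiblePair T X XT x₀ f g x u ∧ Jcost T h H x u ≤ c0 := by
  have hM := A.hM
  have hex : ∀ k : ℕ, ∃ p : ℝ → KK m T X, Measurable p ∧ ∃ y, A.cost k 0 x₀ p y < c0 := by
    intro k
    by_contra hcon
    push Not at hcon
    exact absurd (A.le_V fun p hp y => hcon p hp y) (not_le.2 (hV k))
  choose p hp y hcost using hex
  set γ : ℕ → ℝ → Fin n → ℝ := fun k => A.traj (p k) 0 x₀ with hγ
  have hγc : ∀ k, Continuous (γ k) := fun k => A.traj_cont (hp k) 0 x₀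
  -- integrability
  have iab : ∀ k a b, IntervalIntegrable (fun s => A.ab (p k s)) volume a b := fun k a b =>
    Dat.ii_bdd _ (A.mab.comp (hp k)) A.M (fun s => A.bab _) a b
  have ic : ∀ k a b, IntervalIntegrable (fun s => A.c (p k s)) volume a b := fun k a b =>
    Dat.ii_bdd _ (A.mc.comp (hp k)) A.M (fun s => A.bc _) a b
  have iN : ∀ (ζ : ℝ → Fin n → ℝ), Continuous ζ → ∀ k a b,
      IntervalIntegrable (fun s => ‖(s, ζ s) - A.ab (p k s)‖) volume a b := by
    intro ζ hζ k a b
    exact (((continuous_id.prodMk hζ).intervalIntegrable a b).sub (iab k a b)).norm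
  -- cost bounds
  have hexp : ∀ k, (∫ s in (0:ℝ)..T, A.c (p k s)) + H (y k) +
      k * ((∫ s in (0:ℝ)..T, ‖(s, γ k s) - A.ab (p k s)‖) + ‖γ k T - y k‖) < c0 := by
    intro k
    have h1 := hcost k
    unfold Dat.cost Dat.rcost at h1
    rw [hAT, intervalIntegral.integral_add (ic k 0 T) ((iN _ (hγc k) k 0 T).const_mul _),
      intervalIntegral.integral_const_mul, hd, he] at h1
    linarith
  have hN0 : ∀ k, 0 ≤ ∫ s in (0:ℝ)..T, ‖(s, γ k s) - A.ab (p k s)‖ := fun k =>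
    intervalIntegral.integral_nonneg hT.le fun s _ => norm_nonneg _
  have hcl : ∀ k, (∫ s in (0:ℝ)..T, A.c (p k s)) + H (y k) ≤ c0 := by
    intro k
    have h1 := hexp k
    have h2 := hN0 k
    have : 0 ≤ (k:ℝ) * ((∫ s in (0:ℝ)..T, ‖(s, γ k s) - A.ab (p k s)‖) + ‖γ k T - y k‖) := by
      positivity
    linarith
  set C1 : ℝ := c0 + A.M * T + A.M with hC1
  have hkb : ∀ k : ℕ, k * ((∫ s in (0:ℝ)..T, ‖(s, γ k s) - A.ab (p k s)‖) + ‖γ k T - y k‖) ≤ C1 := by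
    intro k
    have h1 := hexp k
    have h2 : ‖∫ s in (0:ℝ)..T, A.c (p k s)‖ ≤ A.M * |T - 0| :=
      intervalIntegral.norm_integral_le_of_norm_le_const (fun s _ => A.bc _)
    rw [sub_zero, abs_of_pos hT, Real.norm_eq_abs] at h2
    have h3 := (abs_le.1 h2).1
    have h4 := (abs_le.1 (A.bd (y k))).1
    rw [hd] at h4
    linarith
  have hδ : ∀ ε > 0, ∀ᶠ k : ℕ in atTop,
      (∫ s in (0:ℝ)..T, ‖(s, γ k s) - A.ab (p k s)‖) + ‖γ k T - y k‖ ≤ ε := by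
    intro ε hε
    obtain ⟨N, hN⟩ := exists_nat_gt (C1 / ε)
    filter_upwards [eventually_ge_atTop (max N 1)] with k hk
    have hk1 : (1:ℝ) ≤ k := by exact_mod_cast (le_max_right N 1).trans hk
    have hkN : (N:ℝ) ≤ k := by exact_mod_cast (le_max_left N 1).trans hk
    by_contra hcon
    rw [not_le] at hcon
    have h1 := hkb k
    have h2 : C1 < k * ε := by
      rw [div_lt_iff₀ hε] at hN
      nlinarith
    have : (k:ℝ) * ε < k * ((∫ s in (0:ℝ)..T, ‖(s, γ k s) - A.ab (p k s)‖) + ‖γ k T - y k‖) := by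
      gcongr
    linarith
  -- limit curve
  obtain ⟨Γ, ψ, hψ, hΓc, hunif⟩ := arzela T hT γ x₀ A.M (fun k => by simp [hγ, Dat.traj])
    (fun k s s' => A.traj_dist (hp k) 0 s s' x₀)
  have hδψ : ∀ ε > 0, ∀ᶠ k : ℕ in atTop,
      (∫ s in (0:ℝ)..T, ‖(s, γ (ψ k) s) - A.ab (p (ψ k) s)‖) + ‖γ (ψ k) T - y (ψ k)‖ ≤ ε :=
    fun ε hε => hψ.tendsto_atTop.eventually (hδ ε hε)
  set Jn : ℕ → ℝ := fun k => ∫ s in (0:ℝ)..T, ‖(s, Γ s) - A.ab (p (ψ k) s)‖ with hJn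
  have hJ : ∀ ε > 0, ∀ᶠ k in atTop, Jn k ≤ ε := by
    intro ε hε
    filter_upwards [hδψ (ε/2) (by positivity), hunif (ε / (2 * T)) (by positivity)] with k h1 h2
    have h3 : Jn k ≤ ∫ s in (0:ℝ)..T, (‖(s, γ (ψ k) s) - A.ab (p (ψ k) s)‖ + ε / (2 * T)) := by
      refine intervalIntegral.integral_mono_on hT.le (iN Γ hΓc _ _ _)
        ((iN _ (hγc _) _ _ _).add intervalIntegrable_const) fun s hs => ?_
      have : (s, Γ s) - A.ab (p (ψ k) s) = ((s, γ (ψ k) s) - A.ab (p (ψ k) s)) +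
          ((0:ℝ), Γ s - γ (ψ k) s) := by
        ext <;> simp
      rw [this]
      refine (norm_add_le _ _).trans ?_
      gcongr
      simpa [Prod.norm_def] using h2 s hs
    rw [intervalIntegral.integral_add (iN _ (hγc _) _ _ _) intervalIntegrable_const,
      intervalIntegral.integral_const, smul_eq_mul] at h3
    have h4 : (T - 0) * (ε / (2 * T)) = ε / 2 := by field_simp; ring
    have := norm_nonneg (γ (ψ k) T - y (ψ k))
    linarith
  have hXne : X.Nonempty := ⟨x₀, hx₀⟩
  have hΓX : ∀ s ∈ Icc 0 T, Γ s ∈ X := by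
    have hcont : Continuous fun s => Metric.infDist (Γ s) X :=
      (Metric.continuous_infDist_pt X).comp hΓc
    have h1 : ∫ s in (0:ℝ)..T, Metric.infDist (Γ s) X ≤ 0 := by
      refine le_of_forall_pos_le_add fun ε hε => ?_
      obtain ⟨k, hk⟩ := (hJ ε hε).exists
      rw [zero_add]
      refine le_trans ?_ hk
      refine intervalIntegral.integral_mono_on hT.le (hcont.intervalIntegrable _ _)
        (iN Γ hΓc _ _ _) fun s _ => ?_
      refine (Metric.infDist_le_dist_of_mem (p (ψ k) s).2.2.1).trans ?_
      rw [hab, dist_eq_norm, Prod.norm_def]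
      exact le_max_right _ _
    have h2 : ∫ s in Icc 0 T, Metric.infDist (Γ s) X = 0 := by
      rw [← ii_Icc _ hT.le]
      exact le_antisymm h1 (intervalIntegral.integral_nonneg hT.le fun s _ => Metric.infDist_nonneg)
    rw [integral_eq_zero_iff_of_nonneg (fun s => Metric.infDist_nonneg)
      (hcont.continuousOn.integrableOn_compact isCompact_Icc)] at h2
    have h3 := Measure.eqOn_Icc_of_ae_eq volume hT.ne h2 hcont.continuousOn continuousOn_const
    intro s hs
    exact (hX.isClosed.mem_iff_infDist_zero hXne).2 (h3 hs)
  have hyt : Tendsto (fun k => (y (ψ k) : Fin n → ℝ)) atTop (𝓝 (Γ T)) := by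
    rw [Metric.tendsto_nhds]
    intro ε hε
    filter_upwards [hδψ (ε/4) (by positivity), hunif (ε/4) (by positivity)] with k h1 h2
    have h3 := hN0 (ψ k)
    have h4 := h2 T ⟨hT.le, le_rfl⟩
    rw [dist_comm, dist_eq_norm]
    have := norm_sub_le_norm_sub_add_norm_sub (Γ T) (γ (ψ k) T) (y (ψ k))
    linarith
  have hΓT : Γ T ∈ XT := hXT.isClosed.mem_of_tendsto hyt (Eventually.of_forall fun k => (y (ψ k)).2)
  have hHt : Tendsto (fun k => H (y (ψ k))) atTop (𝓝 (H (Γ T))) := (hH.tendsto _).comp hyt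
  -- clamped integrands
  let cl : ℝ → ℝ := fun s => max 0 (min s T)
  have hclc : Continuous cl := by fun_prop
  have hclm : ∀ s, cl s ∈ Icc 0 T := fun s => ⟨le_max_left _ _, max_le hT.le (min_le_right _ _)⟩
  have hcle : ∀ s ∈ Icc 0 T, cl s = s := fun s hs => by simp [cl, hs.1, hs.2]
  let e : ℝ × (Fin m → ℝ) → ℝ × (Fin n → ℝ) × (Fin m → ℝ) :=
    fun z => (cl z.1, Γ (cl z.1), clampU z.2)
  have hec : Continuous e := by
    have := clampU_cont (m := m)
    fun_prop
  have hem : ∀ z, e z ∈ KK m T X := fun z => ⟨hclm _, hΓX _ (hclm _), clampU_mem _⟩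
  have hee : ∀ s ∈ Icc 0 T, ∀ u ∈ Ubox m, e (s, u) = (s, Γ s, u) := by
    intro s hs u hu
    simp only [e, hcle s hs, clampU_eq hu]
  have hFc := Fvec_contOn X hf hg
  obtain ⟨u, hum, huU, hu1, hu2⟩ := L2_lemma T (fun z => Fvec f g (e z)) (hFc.comp_continuous hec hem)
    A.M (fun z => by have := A.bφ ⟨e z, hem z⟩; rwa [hφ] at this)
    (by
      intro s hs u hu v hv a b ha hb hab
      rw [hee s hs _ hu, hee s hs _ hv, hee s hs _ (Ubox_convex m hu hv ha hb hab)]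
      exact Fvec_affine f g s _ u v a b hab)
    (fun z => h (e z)) (hh.comp hec) A.M
    (fun z => by have := A.bc ⟨e z, hem z⟩; rwa [hc] at this)
    (by
      intro s hs u hu v hv a b ha hb hab
      rw [hee s hs _ hu, hee s hs _ hv, hee s hs _ (Ubox_convex m hu hv ha hb hab)]
      exact (hconv s (Γ s)).2 (mem_univ u) (mem_univ v) ha hb hab)
    (fun t => Γ t - x₀) (c0 - H (Γ T))
    (by
      intro ε hε
      obtain ⟨C, hC0, hC⟩ := modulus (KK_compact (m := m) (T := T) hX) hFc
        (ε := ε / (4 * T)) (by positivity)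
      obtain ⟨D, hD0, hD⟩ := modulus (KK_compact (m := m) (T := T) hX) hh.continuousOn
        (ε := ε / (4 * T)) (by positivity)
      have hHe : ∀ᶠ k in atTop, |H (y (ψ k)) - H (Γ T)| < ε / 4 := by
        have := (Metric.tendsto_nhds.1 hHt) (ε/4) (by positivity)
        simpa [Real.dist_eq] using this
      obtain ⟨k, hk1, hk2, hk3⟩ := ((hJ (ε / (4 * (C + D + 1))) (by positivity)).and
        ((hunif (ε/4) (by positivity)).and hHe)).exists
      have hJ0 : 0 ≤ Jn k := intervalIntegral.integral_nonneg hT.le fun s _ => norm_nonneg _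
      have hJb : (C + D + 1) * Jn k ≤ ε / 4 := by
        calc _ ≤ (C + D + 1) * (ε / (4 * (C + D + 1))) := by gcongr
          _ = ε / 4 := by field_simp
      have hCJ : C * Jn k ≤ ε / 4 := by nlinarith
      have hDJ : D * Jn k ≤ ε / 4 := by nlinarith
      set u : ℝ → Fin m → ℝ := fun s => (p (ψ k) s).1.2.2 with hu
      have hum : Measurable u :=
        measurable_snd.comp (measurable_snd.comp (measurable_subtype_coe.comp (hp (ψ k))))
      have huU : ∀ s, u s ∈ Ubox m := fun s => (p (ψ k) s).2.2.2
      have hdist : ∀ s, ‖(s, Γ s, u s) - (p (ψ k) s).1‖ = ‖(s, Γ s) - A.ab (p (ψ k) s)‖ := by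
        intro s
        rw [hab]
        simp only [Prod.norm_def, Prod.fst_sub, Prod.snd_sub, hu, sub_self, norm_zero]
        rw [max_eq_left (norm_nonneg (Γ s - (p (ψ k) s).1.2.1))]
      have hmemK : ∀ s ∈ Icc 0 T, (s, Γ s, u s) ∈ KK m T X := fun s hs => ⟨hs, hΓX s hs, huU s⟩
      have iG : ∀ a b, IntervalIntegrable (fun s => Fvec f g (e (s, u s))) volume a b := by
        intro a b
        refine Dat.ii_bdd _ ?_ A.M
          (fun s => by have := A.bφ ⟨e (s, u s), hem _⟩; rwa [hφ] at this) a b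
        exact (hFc.comp_continuous hec hem).measurable.comp (measurable_id.prodMk hum)
      have iL : ∀ a b, IntervalIntegrable (fun s => h (e (s, u s))) volume a b := by
        intro a b
        refine Dat.ii_bdd _ ?_ A.M
          (fun s => by have := A.bc ⟨e (s, u s), hem _⟩; rwa [hc] at this) a b
        exact (hh.comp hec).measurable.comp (measurable_id.prodMk hum)
      refine ⟨u, hum, huU, ?_, ?_⟩
      · intro t ht
        rw [← ii_Icc _ ht.1]
        have e1 : Γ t - x₀ - ∫ s in (0:ℝ)..t, Fvec f g (e (s, u s)) =
            (Γ t - γ (ψ k) t) + ∫ s in (0:ℝ)..t, (A.φ (p (ψ k) s) - Fvec f g (e (s, u s))) := by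
          rw [intervalIntegral.integral_sub (A.iiφ (hp _) _ _) (iG _ _)]
          simp only [hγ, Dat.traj]
          abel
        rw [e1]
        refine (norm_add_le _ _).trans ?_
        have h2 := hk2 t ht
        have h3 : ‖∫ s in (0:ℝ)..t, (A.φ (p (ψ k) s) - Fvec f g (e (s, u s)))‖ ≤
            ∫ s in (0:ℝ)..t, (ε / (4 * T) + C * ‖(s, Γ s) - A.ab (p (ψ k) s)‖) := by
          refine intervalIntegral.norm_integral_le_of_norm_le ht.1
            (Eventually.of_forall fun s hs => ?_)
            (intervalIntegrable_const.add ((iN Γ hΓc _ _ _).const_mul C))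
          have hs' : s ∈ Icc 0 T := ⟨hs.1.le, hs.2.trans ht.2⟩
          rw [hee s hs' _ (huU s), hφ, norm_sub_rev, ← hdist s]
          exact hC _ (hmemK s hs') _ (p (ψ k) s).2
        have h4 : ∫ s in (0:ℝ)..t, (ε / (4 * T) + C * ‖(s, Γ s) - A.ab (p (ψ k) s)‖) ≤
            ∫ s in (0:ℝ)..T, (ε / (4 * T) + C * ‖(s, Γ s) - A.ab (p (ψ k) s)‖) := by
          refine intervalIntegral.integral_mono_interval le_rfl ht.1 ht.2
            (Eventually.of_forall fun s => by dsimp only [Pi.zero_apply]; positivity)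
            (intervalIntegrable_const.add ((iN Γ hΓc _ _ _).const_mul C))
        rw [intervalIntegral.integral_add intervalIntegrable_const
          ((iN Γ hΓc _ 0 T).const_mul C), intervalIntegral.integral_const_mul,
          intervalIntegral.integral_const, smul_eq_mul] at h4
        have h5 : (T - 0) * (ε / (4 * T)) = ε / 4 := by field_simp; ring
        have h6 : C * (∫ s in (0:ℝ)..T, ‖(s, Γ s) - A.ab (p (ψ k) s)‖) ≤ ε / 4 := hCJ
        linarith
      · rw [← ii_Icc _ hT.le]
        have h3 : ∫ s in (0:ℝ)..T, h (e (s, u s)) ≤ ∫ s in (0:ℝ)..T, (A.c (p (ψ k) s) +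
            (ε / (4 * T) + D * ‖(s, Γ s) - A.ab (p (ψ k) s)‖)) := by
          refine intervalIntegral.integral_mono_on hT.le (iL _ _) ((ic _ _ _).add
            (intervalIntegrable_const.add ((iN Γ hΓc _ _ _).const_mul D))) fun s hs => ?_
          have := hD _ (hmemK s hs) _ (p (ψ k) s).2
          rw [hdist s] at this
          rw [hee s hs _ (huU s), hc]
          have h4 := (abs_le.1 this).2
          linarith
        rw [intervalIntegral.integral_add (ic _ _ _)
          (intervalIntegrable_const.add ((iN Γ hΓc _ 0 T).const_mul D)),
          intervalIntegral.integral_add intervalIntegrable_const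
          ((iN Γ hΓc _ 0 T).const_mul D), intervalIntegral.integral_const_mul,
          intervalIntegral.integral_const, smul_eq_mul] at h3
        have h5 : (T - 0) * (ε / (4 * T)) = ε / 4 := by field_simp; ring
        have h6 : D * (∫ s in (0:ℝ)..T, ‖(s, Γ s) - A.ab (p (ψ k) s)‖) ≤ ε / 4 := hDJ
        have h7 := hcl (ψ k)
        have h8 := (abs_lt.1 hk3).1
        linarith)
  have hGe : ∀ t ∈ Icc 0 T, EqOn (fun s => Fvec f g (e (s, u s))) (fun s => Fvec f g (s, Γ s, u s))
      (Icc 0 t) := by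
    intro t ht s hs
    dsimp only
    rw [hee s ⟨hs.1, hs.2.trans ht.2⟩ _ (huU s)]
  refine ⟨Γ, u, ⟨hum, fun t _ => huU t, ?_, hΓT, hΓX, ?_, ?_⟩, ?_⟩
  · have := hu1 0 ⟨le_rfl, hT.le⟩
    simp only [Icc_self, Measure.restrict_singleton] at this
    simpa [sub_eq_zero] using this
  · refine IntegrableOn.congr_fun ?_ (hGe T ⟨hT.le, le_rfl⟩) measurableSet_Icc
    refine Measure.integrableOn_of_bounded (M := A.M) (by simp) ?_
      (Eventually.of_forall fun s => by have := A.bφ ⟨e (s, u s), hem _⟩; rwa [hφ] at this)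
    exact ((hFc.comp_continuous hec hem).measurable.comp
      (measurable_id.prodMk hum)).aestronglyMeasurable
  · intro t ht
    rw [← setIntegral_congr_fun measurableSet_Icc (hGe t ht), ← hu1 t ht]
    abel
  · unfold Jcost
    have : ∫ s in Icc 0 T, h (s, Γ s, u s) = ∫ s in Icc 0 T, h (e (s, u s)) := by
      refine setIntegral_congr_fun measurableSet_Icc fun s hs => ?_
      rw [hee s hs _ (huU s)]
    rw [this]
    linarith

lemma exists_Dat {n m : ℕ} (T : ℝ) (hT : 0 < T)
    (X XT : Set (Fin n → ℝ)) (hX : IsCompact X) (hXT : IsCompact XT)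
    (f : ℝ × (Fin n → ℝ) → Fin n → ℝ) (g : ℝ × (Fin n → ℝ) → Fin n → Fin m → ℝ)
    (hf : ContinuousOn f (Set.Icc (0 : ℝ) T ×ˢ Set.univ))
    (hg : ContinuousOn g (Set.Icc (0 : ℝ) T ×ˢ Set.univ))
    (h : ℝ × (Fin n → ℝ) × (Fin m → ℝ) → ℝ) (H : (Fin n → ℝ) → ℝ)
    (hh : Continuous h) (hH : Continuous H) :
    ∃ A : Dat n (KK m T X) XT, A.T = T ∧ (∀ q, A.φ q = Fvec f g q) ∧
      (∀ q, A.ab q = (q.1.1, q.1.2.1)) ∧ (∀ q, A.c q = h q) ∧ (∀ y, A.e y = y) ∧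
      (∀ y, A.d y = H y) := by
  have hK : IsCompact (KK m T X) := KK_compact hX
  have hF := Fvec_contOn (m := m) X hf hg
  obtain ⟨C1, h1⟩ := hK.exists_bound_of_continuousOn hF
  obtain ⟨C2, h2⟩ := hK.exists_bound_of_continuousOn
    (f := fun z : ℝ × (Fin n → ℝ) × (Fin m → ℝ) => (z.1, z.2.1)) (by fun_prop)
  obtain ⟨C3, h3⟩ := hK.exists_bound_of_continuousOn hh.continuousOn
  obtain ⟨C4, h4⟩ := hXT.exists_bound_of_continuousOn (f := fun y => y) continuousOn_id
  obtain ⟨C5, h5⟩ := hXT.exists_bound_of_continuousOn hH.continuousOn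
  have a1 := le_abs_self C1
  have a2 := le_abs_self C2
  have a3 := le_abs_self C3
  have a4 := le_abs_self C4
  have a5 := le_abs_self C5
  have b1 := abs_nonneg C1
  have b2 := abs_nonneg C2
  have b3 := abs_nonneg C3
  have b4 := abs_nonneg C4
  have b5 := abs_nonneg C5
  exact ⟨{ φ := fun q => Fvec f g q
           ab := fun q => (q.1.1, q.1.2.1)
           c := fun q => h q
           e := fun y => y
           d := fun y => H y
           M := |C1| + |C2| + |C3| + |C4| + |C5|
           T := T
           hM := by positivity
           hT := hT
           mφ := (continuousOn_iff_continuous_domRestrict.1 hF).measurable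
           mab := by fun_prop
           mc := hh.measurable.comp measurable_subtype_coe
           bφ := fun q => (h1 q q.2).trans (by linarith)
           bab := fun q => (h2 q q.2).trans (by linarith)
           bc := fun q => (h3 q q.2).trans (by linarith)
           be := fun y => (h4 y y.2).trans (by linarith)
           bd := fun y => (h5 y y.2).trans (by linarith) },
    rfl, fun _ => rfl, fun _ => rfl, fun _ => rfl, fun _ => rfl, fun _ => rfl⟩

lemma LFop_eq {n m : ℕ} (f : ℝ × (Fin n → ℝ) → Fin n → ℝ)
    (g : ℝ × (Fin n → ℝ) → Fin n → Fin m → ℝ)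
    (v : ℝ × (Fin n → ℝ) → ℝ) (z : ℝ × (Fin n → ℝ) × (Fin m → ℝ)) :
    LFop f g v z = fderiv ℝ v (z.1, z.2.1) (1, Fvec f g z) := by
  have : ((1 : ℝ), Fvec f g z) = (1, 0) +
      ∑ k, Fvec f g z k • ((0 : ℝ), (Pi.single k (1:ℝ) : Fin n → ℝ)) := by
    ext i
    · simp [Prod.fst_sum]
    · simp [Prod.snd_sum, Finset.sum_apply, Pi.single_apply]
  rw [this, map_add, map_sum, LFop]
  congr 1
  refine Finset.sum_congr rfl fun k _ => ?_
  rw [map_smul, smul_eq_mul, mul_comm]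

lemma integrable_of_contOn {Z E : Type*} [TopologicalSpace Z] [MeasurableSpace Z] [BorelSpace Z]
    [T2Space Z]
    [NormedAddCommGroup E] {K : Set Z} (hK : IsCompact K) {μ : Measure Z}
    [IsFiniteMeasure μ] (hμ : μ Kᶜ = 0) {F : Z → E} (hF : ContinuousOn F K) : Integrable F μ := by
  have := hF.integrableOn_compact' (μ := μ) hK hK.measurableSet
  rw [IntegrableOn, Measure.restrict_eq_self_of_ae_mem] at this
  · exact this
  · rw [ae_iff]; exact hμ

lemma LFop_contOn {n m : ℕ} {T : ℝ} (X : Set (Fin n → ℝ))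
    {f : ℝ × (Fin n → ℝ) → Fin n → ℝ} {g : ℝ × (Fin n → ℝ) → Fin n → Fin m → ℝ}
    (hf : ContinuousOn f (Set.Icc (0 : ℝ) T ×ˢ Set.univ))
    (hg : ContinuousOn g (Set.Icc (0 : ℝ) T ×ˢ Set.univ))
    {v : ℝ × (Fin n → ℝ) → ℝ} (hv : ContDiff ℝ 1 v) :
    ContinuousOn (LFop f g v) (KK m T X) := by
  have : LFop f g v = fun z => fderiv ℝ v (z.1, z.2.1) (1, Fvec f g z) :=
    funext (LFop_eq f g v)
  rw [this]
  have h1 : Continuous fun z : ℝ × (Fin n → ℝ) × (Fin m → ℝ) => fderiv ℝ v (z.1, z.2.1) :=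
    (hv.continuous_fderiv one_ne_zero).comp (by fun_prop)
  exact h1.continuousOn.clm_apply (continuousOn_const.prodMk (Fvec_contOn X hf hg))

lemma weak_duality {n m : ℕ} (T : ℝ) (hT : 0 < T)
    (X XT : Set (Fin n → ℝ)) (hX : IsCompact X) (hXT : IsCompact XT)
    (x₀ : Fin n → ℝ)
    (f : ℝ × (Fin n → ℝ) → Fin n → ℝ) (g : ℝ × (Fin n → ℝ) → Fin n → Fin m → ℝ)
    (hf : ContinuousOn f (Set.Icc (0 : ℝ) T ×ˢ Set.univ))
    (hg : ContinuousOn g (Set.Icc (0 : ℝ) T ×ˢ Set.univ))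
    (h : ℝ × (Fin n → ℝ) × (Fin m → ℝ) → ℝ) (H : (Fin n → ℝ) → ℝ)
    (hh : Continuous h) (hH : Continuous H)
    (η : Measure (ℝ × (Fin n → ℝ) × (Fin m → ℝ))) (ηT : Measure (Fin n → ℝ))
    (hQ : QFeasible T X XT x₀ f g η ηT) (v : ℝ × (Fin n → ℝ) → ℝ) (hv : ContDiff ℝ 1 v)
    (ε : ℝ) (h1 : ∀ z ∈ KK m T X, -ε ≤ LFop f g v z + h z)
    (h2 : ∀ y ∈ XT, v (T, y) ≤ H y + ε) : v (0, x₀) ≤ Qcost h H η ηT + ε * (T + 1) := by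
  obtain ⟨i1, i2, n1, n2, hL⟩ := hQ
  have hK : IsCompact (KK m T X) := KK_compact hX
  have m1 : ηT.real univ = 1 := by
    have := hL (fun _ => 1) contDiff_const
    have e : LFop f g (fun _ => (1:ℝ)) = fun _ => 0 := by funext z; rw [LFop_eq]; simp
    rw [e] at this
    simpa using this.symm
  have m2 : η.real univ = T := by
    have := hL (fun z => z.1) contDiff_fst
    have e : LFop f g (fun z : ℝ × (Fin n → ℝ) => z.1) = fun _ => 1 := by
      funext z; rw [LFop_eq]
      have : fderiv ℝ (fun z : ℝ × (Fin n → ℝ) => z.1) (z.1, z.2.1) =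
        ContinuousLinearMap.fst ℝ ℝ (Fin n → ℝ) := fderiv_fst
      rw [this]; rfl
    rw [e] at this
    simpa [m1] using this
  have hLv := hL v hv
  have iL : Integrable (LFop f g v) η := integrable_of_contOn hK n1 (LFop_contOn X hf hg hv)
  have ih : Integrable h η := integrable_of_contOn hK n1 hh.continuousOn
  have iH : Integrable H ηT := integrable_of_contOn hXT n2 hH.continuousOn
  have iv : Integrable (fun y => v (T, y)) ηT :=
    integrable_of_contOn hXT n2 (hv.continuous.comp (by fun_prop)).continuousOn
  have k1 : ∫ z, -ε ∂η ≤ ∫ z, (LFop f g v z + h z) ∂η := by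
    refine integral_mono_ae (integrable_const _) (iL.add ih) ?_
    have : ∀ᵐ z ∂η, z ∈ KK m T X := by rw [ae_iff]; exact n1
    filter_upwards [this] with z hz using h1 z hz
  have k2 : ∫ y, v (T, y) ∂ηT ≤ ∫ y, (H y + ε) ∂ηT := by
    refine integral_mono_ae iv (iH.add (integrable_const _)) ?_
    have : ∀ᵐ z ∂ηT, z ∈ XT := by rw [ae_iff]; exact n2
    filter_upwards [this] with z hz using h2 z hz
  rw [integral_add iL ih, integral_const, m2, smul_eq_mul] at k1
  rw [integral_add iH (integrable_const _), integral_const, m1, smul_eq_mul] at k2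
  unfold Qcost
  linarith

lemma lower_bound {n m : ℕ} (T : ℝ) (hT : 0 < T)
    (X XT : Set (Fin n → ℝ)) (hX : IsCompact X) (hXT : IsCompact XT)
    (x₀ : Fin n → ℝ) (hx₀ : x₀ ∈ X)
    (f : ℝ × (Fin n → ℝ) → Fin n → ℝ) (g : ℝ × (Fin n → ℝ) → Fin n → Fin m → ℝ)
    (hf : ContinuousOn f (Set.Icc (0 : ℝ) T ×ˢ Set.univ))
    (hg : ContinuousOn g (Set.Icc (0 : ℝ) T ×ˢ Set.univ))
    (h : ℝ × (Fin n → ℝ) × (Fin m → ℝ) → ℝ) (H : (Fin n → ℝ) → ℝ)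
    (hh : Continuous h) (hH : Continuous H)
    (hconv : ∀ (t : ℝ) (x : Fin n → ℝ),
      ConvexOn ℝ Set.univ (fun u : Fin m → ℝ => h (t, x, u)))
    (hXTne : XT.Nonempty) (J : ℝ)
    (hJ : ∀ x u, IsAdmissiblePair T X XT x₀ f g x u → J ≤ Jcost T h H x u)
    (η : Measure (ℝ × (Fin n → ℝ) × (Fin m → ℝ))) (ηT : Measure (Fin n → ℝ))
    (hQ : QFeasible T X XT x₀ f g η ηT) : J ≤ Qcost h H η ηT := by
  obtain ⟨A, hAT, hφ, hab, hc, he, hd⟩ := exists_Dat T hT X XT hX hXT f g hf hg h H hh hH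
  have : Nonempty (KK m T X) := ⟨⟨(0, x₀, clampU 0), ⟨le_rfl, hT.le⟩, hx₀, clampU_mem _⟩⟩
  have : Nonempty XT := hXTne.to_subtype
  refine le_of_forall_lt fun c0 hc0 => ?_
  obtain ⟨c1, hc01, hc1⟩ := exists_between hc0
  have hk : ∃ k : ℕ, c1 ≤ A.V k 0 x₀ := by
    by_contra hcon
    push Not at hcon
    obtain ⟨x, u, hxu, hle⟩ := compactness T hT X XT hX hXT x₀ hx₀ f g hf hg h H hh hH hconv A
      hAT hφ hab hc he hd c1 hcon
    have := hJ x u hxu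
    linarith
  obtain ⟨k, hk⟩ := hk
  set ε : ℝ := (c1 - c0) / (2 * (T + 2)) with hε
  have hε0 : 0 < ε := div_pos (by linarith) (by linarith)
  obtain ⟨v, hv, s1, s2, s3⟩ := A.exists_subsol (k := k) (Nat.cast_nonneg k) x₀ hε0
  have := weak_duality T hT X XT hX hXT x₀ f g hf hg h H hh hH η ηT hQ v hv ε
    (fun z hz => by
      have := s1 ⟨z, hz⟩ (by rw [hab, hAT]; exact hz.1)
      rw [hab, hφ, hc] at this
      rw [LFop_eq]; exact this)
    (fun y hy => by
      have := s2 ⟨y, hy⟩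
      rwa [hAT, he, hd] at this)
  have e1 : ε * (T + 2) = (c1 - c0) / 2 := by
    rw [hε]; field_simp
  linarith

lemma occupation {n m : ℕ} (T : ℝ) (hT : 0 < T)
    (X XT : Set (Fin n → ℝ)) (hX : IsCompact X) (hXT : IsCompact XT)
    (x₀ : Fin n → ℝ)
    (f : ℝ × (Fin n → ℝ) → Fin n → ℝ) (g : ℝ × (Fin n → ℝ) → Fin n → Fin m → ℝ)
    (hf : ContinuousOn f (Set.Icc (0 : ℝ) T ×ˢ Set.univ))
    (hg : ContinuousOn g (Set.Icc (0 : ℝ) T ×ˢ Set.univ))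
    (h : ℝ × (Fin n → ℝ) × (Fin m → ℝ) → ℝ) (H : (Fin n → ℝ) → ℝ)
    (hh : Continuous h)
    (xs : ℝ → Fin n → ℝ) (us : ℝ → Fin m → ℝ)
    (hopt : IsAdmissiblePair T X XT x₀ f g xs us) :
    ∃ η ηT, QFeasible T X XT x₀ f g η ηT ∧ Jcost T h H xs us = Qcost h H η ηT := by
  obtain ⟨hum, huU, hx0, hxT, hxX, hint, hxe⟩ := hopt
  set G : ℝ → Fin n → ℝ := (Icc 0 T).indicator fun s => Fvec f g (s, xs s, us s) with hG
  have hGi : Integrable G := (integrable_indicator_iff measurableSet_Icc).2 hint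
  set y : ℝ → Fin n → ℝ := fun t => x₀ + ∫ s in (0:ℝ)..t, G s with hy
  have hK : IsCompact (KK m T X) := KK_compact hX
  have hmem : ∀ s ∈ Icc 0 T, (s, xs s, us s) ∈ KK m T X := fun s hs => ⟨hs, hxX s hs, huU s hs⟩
  have hxy : ∀ t ∈ Icc 0 T, xs t = y t := by
    intro t ht
    rw [hxe t ht, hy]
    simp only
    rw [ii_Icc _ ht.1]
    congr 1
    refine setIntegral_congr_fun measurableSet_Icc fun s hs => ?_
    rw [hG, indicator_of_mem]
    exact ⟨hs.1, hs.2.trans ht.2⟩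
  obtain ⟨M, hM⟩ := hK.exists_bound_of_continuousOn (Fvec_contOn (m := m) X hf hg)
  have hM0 : 0 ≤ M := (norm_nonneg _).trans (hM _ (hmem 0 ⟨le_rfl, hT.le⟩))
  have hGb : ∀ s, ‖G s‖ ≤ M := by
    intro s
    by_cases hs : s ∈ Icc 0 T
    · rw [hG, indicator_of_mem hs]; exact hM _ (hmem s hs)
    · rw [hG, indicator_of_notMem hs]; simpa using hM0
  have hyL : LipschitzWith M.toNNReal y := by
    refine LipschitzWith.of_dist_le_mul fun a b => ?_
    rw [dist_eq_norm, hy]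
    simp only [add_sub_add_left_eq_sub]
    rw [intervalIntegral.integral_interval_sub_left hGi.intervalIntegrable hGi.intervalIntegrable,
      Real.coe_toNNReal _ hM0, Real.dist_eq]
    exact intervalIntegral.norm_integral_le_of_norm_le_const fun s _ => hGb s
  have hyc := hyL.continuous
  have hder : ∀ᵐ t, HasDerivAt y (G t) t := by
    filter_upwards [LocallyIntegrable.ae_hasDerivAt_integral hGi.locallyIntegrable] with t ht
    exact (ht 0).const_add x₀
  set P : ℝ → ℝ × (Fin n → ℝ) × (Fin m → ℝ) := fun t => (t, y t, us t) with hP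
  have hPm : Measurable P := measurable_id.prodMk (hyc.measurable.prodMk hum)
  have hPK : ∀ t ∈ Icc 0 T, P t ∈ KK m T X := fun t ht => by
    have := hmem t ht; rw [hxy t ht] at this; exact this
  set μ := (volume.restrict (Icc 0 T)).map P with hμ
  have hfin : IsFiniteMeasure μ := by rw [hμ]; infer_instance
  have hμ0 : μ (KK m T X)ᶜ = 0 := by
    rw [hμ, Measure.map_apply hPm hK.measurableSet.compl, Measure.restrict_apply
      (hPm hK.measurableSet.compl)]
    convert measure_empty (μ := (volume : Measure ℝ))
    rw [← disjoint_iff_inter_eq_empty, Set.disjoint_left]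
    exact fun t ht ht' => ht (hPK t ht')
  have hI : ∀ F : ℝ × (Fin n → ℝ) × (Fin m → ℝ) → ℝ, ContinuousOn F (KK m T X) →
      ∫ z, F z ∂μ = ∫ t in Icc 0 T, F (P t) := by
    intro F hF
    exact integral_map hPm.aemeasurable (integrable_of_contOn hK hμ0 hF).aestronglyMeasurable
  have hTm : T ∈ Icc 0 T := ⟨hT.le, le_rfl⟩
  refine ⟨μ, Measure.dirac (xs T), ⟨hfin, inferInstance, hμ0, ?_, ?_⟩, ?_⟩
  · rw [Measure.dirac_apply' _ hXT.measurableSet.compl]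
    simpa using hxT
  · intro v hv
    rw [hI _ (LFop_contOn X hf hg hv), integral_dirac, hxy T hTm]
    set Φ : ℝ → ℝ := fun t => v (t, y t) with hΦ
    have hpL : LipschitzWith (max 1 M.toNNReal) (fun t : ℝ => (t, y t)) :=
      LipschitzWith.id.prodMk hyL
    have hΦL : LocallyLipschitz Φ := hv.locallyLipschitz.comp hpL.locallyLipschitz
    obtain ⟨C, hC⟩ := (hΦL.locallyLipschitzOn (s := uIcc 0 T)).exists_lipschitzOnWith_of_compact
      isCompact_uIcc
    have hac := hC.absolutelyContinuousOnInterval.integral_deriv_eq_sub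
    rw [ii_Icc _ hT.le] at hac
    have e : ∫ t in Icc 0 T, LFop f g v (P t) = ∫ t in Icc 0 T, deriv Φ t := by
      refine setIntegral_congr_ae measurableSet_Icc ?_
      filter_upwards [hder] with t ht htm
      have h1 : HasDerivAt (fun t : ℝ => (t, y t)) (1, G t) t := (hasDerivAt_id t).prodMk ht
      have h2 := ((hv.differentiable one_ne_zero (t, y t)).hasFDerivAt).comp_hasDerivAt t h1
      have h3 : deriv Φ t = fderiv ℝ v (t, y t) (1, G t) := h2.deriv
      rw [h3, LFop_eq, hG, indicator_of_mem htm, hxy t htm]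
    rw [e, hac, hΦ]
    have : y 0 = x₀ := by simp [hy]
    simp only [this]
    ring
  · unfold Jcost Qcost
    rw [hI h hh.continuousOn, integral_dirac]
    congr 1
    refine setIntegral_congr_fun measurableSet_Icc fun t ht => ?_
    simp only [hP]
    rw [hxy t ht]

theorem Q_main
    {n m : ℕ} (hn : 0 < n) (hm : 0 < m) (T : ℝ) (hT : 0 < T)
    (X XT : Set (Fin n → ℝ)) (hX : IsCompact X) (hXT : IsCompact XT) (hXTsub : XT ⊆ X)
    (x₀ : Fin n → ℝ) (hx₀ : x₀ ∈ X)
    (f : ℝ × (Fin n → ℝ) → Fin n → ℝ) (g : ℝ × (Fin n → ℝ) → Fin n → Fin m → ℝ)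
    (hf : ContinuousOn f (Set.Icc (0 : ℝ) T ×ˢ Set.univ))
    (hg : ContinuousOn g (Set.Icc (0 : ℝ) T ×ˢ Set.univ))
    (h : ℝ × (Fin n → ℝ) × (Fin m → ℝ) → ℝ) (H : (Fin n → ℝ) → ℝ)
    (hh : Continuous h) (hH : Continuous H)
    (xs : ℝ → Fin n → ℝ) (us : ℝ → Fin m → ℝ)
    (hconv : ∀ (t : ℝ) (x : Fin n → ℝ),
      ConvexOn ℝ Set.univ (fun u : Fin m → ℝ => h (t, x, u)))
    (hopt : IsAdmissiblePair T X XT x₀ f g xs us)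
    (hleast : IsLeast (JVals T X XT x₀ f g h H) (Jcost T h H xs us)) :
    sInf (QVals T X XT x₀ f g h H) = sInf (JVals T X XT x₀ f g h H) ∧
      sInf (JVals T X XT x₀ f g h H) = Jcost T h H xs us := by
  have h1 : IsLeast (QVals T X XT x₀ f g h H) (Jcost T h H xs us) := by
    refine ⟨?_, ?_⟩
    · exact occupation T hT X XT hX hXT x₀ f g hf hg h H hh xs us hopt
    · rintro c ⟨η, ηT, hQ, rfl⟩
      exact lower_bound T hT X XT hX hXT x₀ hx₀ f g hf hg h H hh hH hconv ⟨xs T, hopt.2.2.2.1⟩ _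
        (fun x u hxu => hleast.2 ⟨x, u, hxu, rfl⟩) η ηT hQ
  rw [h1.csInf_eq, hleast.csInf_eq]
  exact ⟨rfl, rfl⟩
end Aux

/-- under convexity of h(t,x,·) and existence of an a.e.-unique optimal
admissible pair, if (Q) is feasible then its minimum q* equals the optimal value of the
optimal control problem: q* = J* = J(x*,u*). -/
theorem Q_value_eq_OCP_value
    {n m : ℕ} (hn : 0 < n) (hm : 0 < m) (T : ℝ) (hT : 0 < T)
    (X XT : Set (Fin n → ℝ)) (hX : IsCompact X) (hXT : IsCompact XT) (hXTsub : XT ⊆ X)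
    (x₀ : Fin n → ℝ) (hx₀ : x₀ ∈ X)
    (f : ℝ × (Fin n → ℝ) → Fin n → ℝ) (g : ℝ × (Fin n → ℝ) → Fin n → Fin m → ℝ)
    (hf : ContinuousOn f (Set.Icc (0 : ℝ) T ×ˢ Set.univ))
    (hg : ContinuousOn g (Set.Icc (0 : ℝ) T ×ˢ Set.univ))
    (h : ℝ × (Fin n → ℝ) × (Fin m → ℝ) → ℝ) (H : (Fin n → ℝ) → ℝ)
    (hh : Continuous h) (hH : Continuous H)
    (xs : ℝ → Fin n → ℝ) (us : ℝ → Fin m → ℝ)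
    (hconv : ∀ (t : ℝ) (x : Fin n → ℝ),
      ConvexOn ℝ Set.univ (fun u : Fin m → ℝ => h (t, x, u)))
    (hopt : IsAdmissiblePair T X XT x₀ f g xs us)
    (hleast : IsLeast (JVals T X XT x₀ f g h H) (Jcost T h H xs us))
    (huniq : ∀ (x : ℝ → Fin n → ℝ) (u : ℝ → Fin m → ℝ),
      IsAdmissiblePair T X XT x₀ f g x u → Jcost T h H x u = Jcost T h H xs us →
      ∀ᵐ t ∂(volume.restrict (Set.Icc (0 : ℝ) T)), x t = xs t ∧ u t = us t)
    (hQfeas : ∃ (η : Measure (ℝ × (Fin n → ℝ) × (Fin m → ℝ))) (ηT : Measure (Fin n → ℝ)),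
      QFeasible T X XT x₀ f g η ηT) :
    sInf (QVals T X XT x₀ f g h H) = sInf (JVals T X XT x₀ f g h H) ∧
      sInf (JVals T X XT x₀ f g h H) = Jcost T h H xs us := by
  exact Q_main hn hm T hT X XT hX hXT hXTsub x₀ hx₀ f g hf hg h H hh hH xs us hconv hopt hleast

end
end
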